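/- arXiv:0903.3446 — 5 statements merged into one kernel-verified Lean document; each statement's English description precedes it below -/
import Mathlib

section
/- The following three identities hold: ∫_{∂B₁} Σ_{i,j=1}^N H_{ij}(y)² dσ(y) = (|S^{N−1}|/(2N(N+2))) Σ_{i,j,k,ℓ=1}^N (W_{ikjℓ}+W_{iℓjk})²; ∫_{∂B₁} Σ_{i,j,k=1}^N ((∂_k H_{ij})(y))² dσ(y) = (|S^{N−1}|/N) Σ_{i,j,k,ℓ=1}^N (W_{ikjℓ}+W_{iℓjk})²; and ∫_{∂B₁} Σ_{i,j,k,ℓ=1}^N ((∂_k∂_ℓ H_{ij})(y))² dσ(y) = |S^{N−1}| Σ_{i,j,k,ℓ=1}^N (W_{ikjℓ}+W_{iℓjk})². -/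
open scoped BigOperators
open MeasureTheory

noncomputable section

/-- The partial derivative `∂f/∂y_i` of a function on Euclidean space. -/
def pd (N : ℕ) (i : Fin N) (f : EuclideanSpace ℝ (Fin N) → ℝ) :
    EuclideanSpace ℝ (Fin N) → ℝ :=
  fun y => fderiv ℝ f y (EuclideanSpace.single i 1)

/-- `H_{ij}(y) = Σ_{p,q} W_{ipjq} y_p y_q`. -/
def Hmat (N : ℕ) (W : Fin N → Fin N → Fin N → Fin N → ℝ) (i j : Fin N)
    (y : EuclideanSpace ℝ (Fin N)) : ℝ :=
  ∑ p : Fin N, ∑ q : Fin N, W i p j q * y p * y q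

/-- The surface measure on the unit sphere `S^{N-1} ⊂ ℝ^N`. -/
def sphereMeasure (N : ℕ) :
    Measure (Metric.sphere (0 : EuclideanSpace ℝ (Fin N)) 1) :=
  (volume : Measure (EuclideanSpace ℝ (Fin N))).toSphere

/-- `|S^{N-1}|`, the total surface measure of the unit sphere in `ℝ^N`. -/
def sphereArea (N : ℕ) : ℝ := (sphereMeasure N Set.univ).toReal

/-! Both moments rest on the invariance of the surface measure under linear isometries: it forces
`∫ ⟪v, y⟫ ^ p = c_p ‖v‖ ^ p`. Summing `⟪b i, y⟫ ^ 2` over an orthonormal basis determines `c_2`.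
Polarizing `p = 4` gives `∫ ⟪u, y⟫ ^ 2 ⟪v, y⟫ ^ 2 = c (‖u‖ ^ 2 ‖v‖ ^ 2 + 2 ⟪u, v⟫ ^ 2)`; expanding a
symmetric operator `T` in an eigenbasis turns this into
`∫ ⟪y, T y⟫ ^ 2 = c ((tr T) ^ 2 + 2 tr (T ^ 2))`, and `T = 1` determines `c`.

Each `H_ij` is the quadratic form `⟪y, S y⟫ / 2` of its Hessian `S k l = W i k j l + W i l j k`, so
the three identities compute `∫ ⟪y, S y⟫ ^ 2 / 4`, `∫ ‖S y‖ ^ 2` and `∫ ‖S‖ ^ 2`, with the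
Frobenius norm in the last. -/

open Metric Module
open scoped RealInnerProductSpace

section CompactSpace

variable {X F ι κ : Type*} [TopologicalSpace X] [CompactSpace X] [MeasurableSpace X]
  [OpensMeasurableSpace X] [NormedAddCommGroup F] {μ : Measure X} [IsFiniteMeasureOnCompacts μ]

theorem integrable_of_continuous_of_compactSpace {f : X → F} (hf : Continuous f) :
    Integrable f μ :=
  hf.integrable_of_hasCompactSupport (.of_compactSpace f)

variable [NormedSpace ℝ F]

theorem integral_finsetSum_of_continuous {s : Finset ι} {f : ι → X → F}
    (hf : ∀ i, Continuous (f i)) : ∫ x, ∑ i ∈ s, f i x ∂μ = ∑ i ∈ s, ∫ x, f i x ∂μ :=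
  integral_finsetSum s fun i _ ↦ integrable_of_continuous_of_compactSpace (hf i)

theorem integral_finsetSum_finsetSum_of_continuous {s : Finset ι} {t : Finset κ}
    {f : ι → κ → X → F} (hf : ∀ i j, Continuous (f i j)) :
    ∫ x, ∑ i ∈ s, ∑ j ∈ t, f i j x ∂μ = ∑ i ∈ s, ∑ j ∈ t, ∫ x, f i j x ∂μ := by
  rw [integral_finsetSum_of_continuous fun i ↦ continuous_finsetSum t fun j _ ↦ hf i j]
  simp only [integral_finsetSum_of_continuous (hf _)]

end CompactSpace

section SymmetricOperator

variable {𝕜 E : Type*} [RCLike 𝕜] [NormedAddCommGroup E] [InnerProductSpace 𝕜 E]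
  [FiniteDimensional 𝕜 E] {T : E →ₗ[𝕜] E} {n : ℕ}

theorem inner_self_apply_eq_sum_eigenvalues_mul (hT : T.IsSymmetric) (hn : finrank 𝕜 E = n)
    (x : E) :
    inner 𝕜 x (T x) =
      ∑ i, (hT.eigenvalues hn i : 𝕜) * ‖inner 𝕜 (hT.eigenvectorBasis hn i) x‖ ^ 2 := by
  rw [← (hT.eigenvectorBasis hn).sum_inner_mul_inner]
  refine Finset.sum_congr rfl fun i _ ↦ ?_
  rw [← hT, hT.apply_eigenvectorBasis, inner_smul_left, RCLike.conj_ofReal, mul_left_comm,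
    ← inner_conj_symm x, RCLike.conj_mul]

theorem trace_mul_self_eq_sum_eigenvalues_sq (hT : T.IsSymmetric) (hn : finrank 𝕜 E = n) :
    (T * T).trace 𝕜 E = ∑ i, (hT.eigenvalues hn i : 𝕜) ^ 2 := by
  rw [LinearMap.trace_eq_sum_inner _ (hT.eigenvectorBasis hn)]
  simp only [Module.End.mul_apply, hT.apply_eigenvectorBasis, map_smul, inner_smul_right,
    inner_self_eq_norm_sq_to_K, OrthonormalBasis.norm_eq_one, sq, RCLike.ofReal_one, mul_one]

end SymmetricOperator

section HalfQuadraticForm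

variable {E : Type*} [NormedAddCommGroup E] [InnerProductSpace ℝ E]

theorem hasFDerivAt_half_inner_self_apply {T : E →L[ℝ] E}
    (hT : (T : E →ₗ[ℝ] E).IsSymmetric) (x : E) :
    HasFDerivAt (fun y ↦ ⟪y, T y⟫ / 2) (innerSL ℝ (T x)) x := by
  have hderiv := (hT.hasStrictFDerivAt_reApplyInnerSelf x).hasFDerivAt.const_mul (2⁻¹ : ℝ)
  convert! hderiv using 1
  · ext y
    simp [ContinuousLinearMap.reApplyInnerSelf_apply, real_inner_comm, div_eq_inv_mul]
  · ext y
    simp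

end HalfQuadraticForm

section SphereMoments

variable {E : Type*} [NormedAddCommGroup E] [InnerProductSpace ℝ E] [MeasurableSpace E]
  [BorelSpace E]

/-- The action of a linear isometry on the unit sphere. -/
def unitSphereEquiv (g : E ≃ₗᵢ[ℝ] E) : sphere (0 : E) 1 ≃ᵐ sphere (0 : E) 1 :=
  (g.toHomeomorph.subtype fun x ↦ by simp).toMeasurableEquiv

variable [FiniteDimensional ℝ E]

open scoped Pointwise in
theorem measurePreserving_unitSphereEquiv (g : E ≃ₗᵢ[ℝ] E) :
    MeasurePreserving (unitSphereEquiv g) (volume : Measure E).toSphere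
      (volume : Measure E).toSphere := by
  refine ⟨(unitSphereEquiv g).measurable, Measure.ext fun s hs ↦ ?_⟩
  have image_coe : (↑) '' s = g '' ((↑) '' (unitSphereEquiv g ⁻¹' s)) := by
    conv_lhs => rw [← Set.image_preimage_eq s (unitSphereEquiv g).surjective]
    simp only [Set.image_image]
    rfl
  have cone_image (t : Set E) : Set.Ioo (0 : ℝ) 1 • g '' t = g '' (Set.Ioo (0 : ℝ) 1 • t) :=
    (Set.image_image2_distrib_right fun r x ↦ map_smul g r x).symm
  rw [Measure.map_apply (unitSphereEquiv g).measurable hs, Measure.toSphere_apply' _ hs,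
    Measure.toSphere_apply' _ ((unitSphereEquiv g).measurable hs), image_coe, cone_image,
    g.image_eq_preimage_symm,
    g.symm.measurePreserving.measure_preimage_emb g.symm.toHomeomorph.measurableEmbedding]

theorem integral_toSphere_comp_linearIsometryEquiv {F : Type*} [NormedAddCommGroup F]
    [NormedSpace ℝ F] (g : E ≃ₗᵢ[ℝ] E) (f : E → F) :
    ∫ y : sphere (0 : E) 1, f (g y) ∂volume.toSphere =
      ∫ y : sphere (0 : E) 1, f y ∂volume.toSphere :=
  (measurePreserving_unitSphereEquiv g).integral_comp' fun y ↦ f y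

theorem norm_pow_mul_integral_inner_pow_toSphere (p : ℕ) (u v : E) :
    ‖u‖ ^ p * ∫ y : sphere (0 : E) 1, ⟪v, y⟫ ^ p ∂volume.toSphere =
      ‖v‖ ^ p * ∫ y : sphere (0 : E) 1, ⟪u, y⟫ ^ p ∂volume.toSphere := by
  have hnorm : ‖‖u‖ • v‖ = ‖‖v‖ • u‖ := by simp [norm_smul, mul_comm]
  let g := (Submodule.span ℝ {‖u‖ • v - ‖v‖ • u})ᗮ.reflection
  have hg : g (‖u‖ • v) = ‖v‖ • u := Submodule.reflection_sub hnorm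
  calc ‖u‖ ^ p * ∫ y : sphere (0 : E) 1, ⟪v, y⟫ ^ p ∂volume.toSphere
    _ = ∫ y : sphere (0 : E) 1, ⟪g (‖u‖ • v), g y⟫ ^ p ∂volume.toSphere := by
      simp only [g.inner_map_map, real_inner_smul_left, mul_pow, integral_const_mul]
    _ = ∫ y : sphere (0 : E) 1, ⟪g (‖u‖ • v), y⟫ ^ p ∂volume.toSphere :=
      integral_toSphere_comp_linearIsometryEquiv g fun y ↦ ⟪g (‖u‖ • v), y⟫ ^ p
    _ = ‖v‖ ^ p * ∫ y : sphere (0 : E) 1, ⟪u, y⟫ ^ p ∂volume.toSphere := by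
      simp only [hg, real_inner_smul_left, mul_pow, integral_const_mul]

variable [Nontrivial E]

theorem integral_inner_sq_toSphere (v : E) :
    ∫ y : sphere (0 : E) 1, ⟪v, y⟫ ^ 2 ∂volume.toSphere =
      (volume : Measure E).toSphere.real Set.univ / finrank ℝ E * ‖v‖ ^ 2 := by
  let b := stdOrthonormalBasis ℝ E
  have hdim : (finrank ℝ E : ℝ) ≠ 0 := mod_cast finrank_pos.ne'
  rw [div_mul_eq_mul_div, eq_div_iff hdim]
  calc (∫ y : sphere (0 : E) 1, ⟪v, y⟫ ^ 2 ∂volume.toSphere) * finrank ℝ E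
    _ = ∑ i, ‖b i‖ ^ 2 * ∫ y : sphere (0 : E) 1, ⟪v, y⟫ ^ 2 ∂volume.toSphere := by
      simp [mul_comm]
    _ = ∑ i, ‖v‖ ^ 2 * ∫ y : sphere (0 : E) 1, ⟪b i, y⟫ ^ 2 ∂volume.toSphere :=
      Finset.sum_congr rfl fun i _ ↦ norm_pow_mul_integral_inner_pow_toSphere 2 (b i) v
    _ = ‖v‖ ^ 2 * ∫ y : sphere (0 : E) 1, ∑ i, ⟪b i, y⟫ ^ 2 ∂volume.toSphere := by
      rw [integral_finsetSum_of_continuous fun i ↦ by fun_prop, Finset.mul_sum]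
    _ = (volume : Measure E).toSphere.real Set.univ * ‖v‖ ^ 2 := by
      simp only [b.sum_sq_inner_right, norm_eq_of_mem_sphere, one_pow, integral_const, smul_eq_mul,
        mul_one]
      rw [mul_comm]

theorem exists_integral_inner_sq_mul_inner_sq_toSphere :
    ∃ c : ℝ, ∀ u v : E, ∫ y : sphere (0 : E) 1, ⟪u, y⟫ ^ 2 * ⟪v, y⟫ ^ 2 ∂volume.toSphere =
      c * (‖u‖ ^ 2 * ‖v‖ ^ 2 + 2 * ⟪u, v⟫ ^ 2) := by
  obtain ⟨e, he⟩ := exists_norm_eq E zero_le_one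
  let m := ∫ y : sphere (0 : E) 1, ⟪e, y⟫ ^ 4 ∂volume.toSphere
  have fourth_moment (w : E) :
      ∫ y : sphere (0 : E) 1, ⟪w, y⟫ ^ 4 ∂volume.toSphere = ‖w‖ ^ 4 * m := by
    simpa only [he, one_pow, one_mul] using norm_pow_mul_integral_inner_pow_toSphere 4 e w
  refine ⟨m / 3, fun u v ↦ ?_⟩
  have norm_add_pow : ‖u + v‖ ^ 4 = (‖u‖ ^ 2 + 2 * ⟪u, v⟫ + ‖v‖ ^ 2) ^ 2 := by
    rw [← norm_add_sq_real, ← pow_mul]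
  have norm_sub_pow : ‖u - v‖ ^ 4 = (‖u‖ ^ 2 - 2 * ⟪u, v⟫ + ‖v‖ ^ 2) ^ 2 := by
    rw [← norm_sub_sq_real, ← pow_mul]
  have polarization (y : E) : ⟪u + v, y⟫ ^ 4 + ⟪u - v, y⟫ ^ 4 =
      12 * (⟪u, y⟫ ^ 2 * ⟪v, y⟫ ^ 2) + 2 * ⟪u, y⟫ ^ 4 + 2 * ⟪v, y⟫ ^ 4 := by
    rw [inner_add_left, inner_sub_left]
    ring
  have integral_polarization := integral_congr_ae (μ := (volume : Measure E).toSphere)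
    (.of_forall fun y ↦ polarization y)
  rw [integral_add, integral_add, integral_add] at integral_polarization
  · simp only [integral_const_mul, fourth_moment, norm_add_pow, norm_sub_pow]
      at integral_polarization
    linear_combination integral_polarization / -12
  all_goals exact integrable_of_continuous_of_compactSpace (by fun_prop)

theorem exists_integral_inner_self_apply_sq_toSphere :
    ∃ c : ℝ, ∀ T : E →ₗ[ℝ] E, T.IsSymmetric →
      ∫ y : sphere (0 : E) 1, ⟪(y : E), T y⟫ ^ 2 ∂volume.toSphere =
        c * (T.trace ℝ E ^ 2 + 2 * (T * T).trace ℝ E) := by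
  obtain ⟨c, hc⟩ := exists_integral_inner_sq_mul_inner_sq_toSphere (E := E)
  refine ⟨c, fun T hT ↦ ?_⟩
  let b := hT.eigenvectorBasis rfl
  let ev := hT.eigenvalues rfl
  have apply_eq (y : E) : ⟪y, T y⟫ = ∑ i, ev i * ⟪b i, y⟫ ^ 2 := by
    simpa only [RCLike.ofReal_real_eq_id, id_eq, Real.norm_eq_abs, sq_abs] using
      inner_self_apply_eq_sum_eigenvalues_mul hT rfl y
  have trace_eq : T.trace ℝ E = ∑ i, ev i := hT.trace_eq_sum_eigenvalues rfl
  have trace_sq_eq : (T * T).trace ℝ E = ∑ i, ev i ^ 2 :=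
    trace_mul_self_eq_sum_eigenvalues_sq hT rfl
  have inner_basis (i j) : ⟪b i, b j⟫ ^ 2 = if i = j then (1 : ℝ) else 0 := by
    rw [orthonormal_iff_ite.mp b.orthonormal, ite_pow, one_pow, zero_pow two_ne_zero]
  calc ∫ y : sphere (0 : E) 1, ⟪(y : E), T y⟫ ^ 2 ∂volume.toSphere
    _ = ∫ y : sphere (0 : E) 1, ∑ i, ∑ j, ev i * ev j * (⟪b i, y⟫ ^ 2 * ⟪b j, y⟫ ^ 2)
          ∂volume.toSphere := by
      simp only [apply_eq, sq (∑ _, _), Finset.sum_mul_sum, mul_mul_mul_comm]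
    _ = ∑ i, ∑ j, ev i * ev j * (c * (1 + 2 * ⟪b i, b j⟫ ^ 2)) := by
      rw [integral_finsetSum_finsetSum_of_continuous fun i j ↦ by fun_prop]
      simp only [integral_const_mul, hc, b.norm_eq_one, one_pow, mul_one]
    _ = ∑ i, ∑ j, (c * (ev i * ev j) + if i = j then c * (2 * (ev i * ev j)) else 0) := by
      simp only [inner_basis]
      refine Finset.sum_congr rfl fun i _ ↦ Finset.sum_congr rfl fun j _ ↦ ?_
      split_ifs <;> ring
    _ = c * ((∑ i, ev i) ^ 2 + 2 * ∑ i, ev i ^ 2) := by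
      simp only [Finset.sum_add_distrib, Finset.sum_ite_eq, Finset.mem_univ, if_true,
        ← Finset.mul_sum, ← Finset.sum_mul, ← sq, ← mul_add]
    _ = c * (T.trace ℝ E ^ 2 + 2 * (T * T).trace ℝ E) := by rw [trace_eq, trace_sq_eq]

theorem integral_inner_self_apply_sq_toSphere {T : E →ₗ[ℝ] E} (hT : T.IsSymmetric) :
    ∫ y : sphere (0 : E) 1, ⟪(y : E), T y⟫ ^ 2 ∂volume.toSphere =
      (volume : Measure E).toSphere.real Set.univ / (finrank ℝ E * (finrank ℝ E + 2)) *
        (T.trace ℝ E ^ 2 + 2 * (T * T).trace ℝ E) := by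
  obtain ⟨c, hc⟩ := exists_integral_inner_self_apply_sq_toSphere (E := E)
  have hdim : (finrank ℝ E : ℝ) ≠ 0 := mod_cast finrank_pos.ne'
  have hone : (volume : Measure E).toSphere.real Set.univ =
      c * (finrank ℝ E ^ 2 + 2 * finrank ℝ E) := by
    simpa [-Measure.toSphere_real_apply_univ] using hc 1 .id
  rw [hc T hT, hone]
  field_simp

end SphereMoments

section Matrix

variable {ι : Type*} [Fintype ι] [DecidableEq ι]

theorem trace_toEuclideanLin (A : Matrix ι ι ℝ) : A.toEuclideanLin.trace ℝ _ = A.trace := by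
  rw [Matrix.toEuclideanLin, Matrix.toLpLin_eq_toLin, Matrix.trace_toLin_eq]

theorem integral_inner_toEuclideanLin_sq_toSphere [Nonempty ι] {S : Matrix ι ι ℝ}
    (hS : S.IsSymm) :
    ∫ y : sphere (0 : EuclideanSpace ℝ ι) 1, ⟪y.1, S.toEuclideanLin y⟫ ^ 2 ∂volume.toSphere =
      (volume : Measure (EuclideanSpace ℝ ι)).toSphere.real Set.univ /
        (Fintype.card ι * (Fintype.card ι + 2)) * (S.trace ^ 2 + 2 * ∑ k, ∑ l, S k l ^ 2) := by
  have trace_sq : (S * S).trace = ∑ k, ∑ l, S k l ^ 2 := by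
    simp only [Matrix.trace, Matrix.diag_apply, Matrix.mul_apply, hS.apply, sq]
  rw [integral_inner_self_apply_sq_toSphere (Matrix.isSymmetric_toEuclideanLin_iff.mpr hS),
    Module.End.mul_eq_comp, ← Matrix.toLpLin_mul_same, trace_toEuclideanLin, trace_toEuclideanLin,
    finrank_euclideanSpace, trace_sq]

end Matrix

section PartialDerivative

variable {N : ℕ} (k : Fin N)

theorem pd_inner_left (v : EuclideanSpace ℝ (Fin N)) :
    pd N k (fun y ↦ ⟪v, y⟫) = fun _ ↦ v k := by
  ext y
  have hderiv : HasFDerivAt (fun y ↦ ⟪v, y⟫) (innerSL ℝ v) y := (innerSL ℝ v).hasFDerivAt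
  rw [pd, hderiv.fderiv, innerSL_apply_apply, EuclideanSpace.inner_single_right]
  simp

theorem pd_half_inner_toEuclideanLin {S : Matrix (Fin N) (Fin N) ℝ} (hS : S.IsSymm) :
    pd N k (fun y ↦ ⟪y, S.toEuclideanLin y⟫ / 2) = fun y ↦ ⟪WithLp.toLp 2 (S k), y⟫ := by
  ext y
  have hderiv : HasFDerivAt (fun y ↦ ⟪y, S.toEuclideanLin y⟫ / 2)
      (innerSL ℝ (S.toEuclideanLin y)) y :=
    hasFDerivAt_half_inner_self_apply (T := S.toEuclideanLin.toContinuousLinearMap)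
      (Matrix.isSymmetric_toEuclideanLin_iff.mpr hS) y
  rw [pd, hderiv.fderiv, innerSL_apply_apply, EuclideanSpace.inner_single_right]
  simp [PiLp.inner_apply, Matrix.mulVec, dotProduct, mul_comm]

end PartialDerivative

section Weyl

variable {N : ℕ} (W : Fin N → Fin N → Fin N → Fin N → ℝ) (i j : Fin N)

/-- The Hessian matrix of the quadratic form `Hmat N W i j`, which is the same at every point. -/
def hessianH : Matrix (Fin N) (Fin N) ℝ := .of fun k l ↦ W i k j l + W i l j k

theorem hessianH_apply (k l : Fin N) : hessianH W i j k l = W i k j l + W i l j k := rfl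

theorem isSymm_hessianH : (hessianH W i j).IsSymm :=
  .ext fun _ _ ↦ add_comm _ _

theorem trace_hessianH : (hessianH W i j).trace = 2 * ∑ p, W i p j p := by
  simp only [Matrix.trace, Matrix.diag_apply, hessianH_apply, ← two_mul, Finset.mul_sum]

theorem Hmat_eq_half_inner_hessianH :
    Hmat N W i j = fun y ↦ ⟪y, (hessianH W i j).toEuclideanLin y⟫ / 2 := by
  ext y
  have swap : ∑ p, ∑ q, W i q j p * y p * y q = Hmat N W i j y := by
    rw [Finset.sum_comm]
    simp only [Hmat, mul_right_comm]
  calc Hmat N W i j y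
    _ = (∑ p, ∑ q, W i p j q * y p * y q + ∑ p, ∑ q, W i q j p * y p * y q) / 2 := by
      rw [swap, Hmat, add_self_div_two]
    _ = ⟪y, (hessianH W i j).toEuclideanLin y⟫ / 2 := by
      simp [PiLp.inner_apply, Matrix.mulVec, dotProduct, hessianH_apply, Finset.sum_mul,
        add_mul, Finset.sum_add_distrib, mul_right_comm]

theorem pd_Hmat (k : Fin N) :
    pd N k (Hmat N W i j) = fun y ↦ ⟪WithLp.toLp 2 (hessianH W i j k), y⟫ := by
  rw [Hmat_eq_half_inner_hessianH, pd_half_inner_toEuclideanLin k (isSymm_hessianH W i j)]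

theorem pd_pd_Hmat (k l : Fin N) :
    pd N k (pd N l (Hmat N W i j)) = fun _ ↦ hessianH W i j k l := by
  rw [pd_Hmat, pd_inner_left, (isSymm_hessianH W i j).apply]

theorem continuous_Hmat : Continuous (Hmat N W i j) := by
  unfold Hmat
  fun_prop

theorem continuous_pd_Hmat (k : Fin N) : Continuous (pd N k (Hmat N W i j)) := by
  rw [pd_Hmat]
  fun_prop

instance : IsFiniteMeasure (sphereMeasure N) :=
  inferInstanceAs (IsFiniteMeasure (volume : Measure (EuclideanSpace ℝ (Fin N))).toSphere)

variable [NeZero N]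

theorem integral_Hmat_sq (hTrace : ∑ p, W i p j p = 0) :
    ∫ y : sphere (0 : EuclideanSpace ℝ (Fin N)) 1, Hmat N W i j y ^ 2 ∂sphereMeasure N =
      sphereArea N / (2 * N * (N + 2)) * ∑ k, ∑ l, hessianH W i j k l ^ 2 := by
  simp only [Hmat_eq_half_inner_hessianH, div_pow, integral_div]
  rw [sphereMeasure, integral_inner_toEuclideanLin_sq_toSphere (isSymm_hessianH W i j),
    trace_hessianH, hTrace, Fintype.card_fin, sphereArea, sphereMeasure, Measure.real]
  field_simp
  ring

theorem integral_sum_pd_Hmat_sq :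
    ∫ y : sphere (0 : EuclideanSpace ℝ (Fin N)) 1, ∑ k, pd N k (Hmat N W i j) y ^ 2
        ∂sphereMeasure N =
      sphereArea N / N * ∑ k, ∑ l, hessianH W i j k l ^ 2 := by
  have hpd := continuous_pd_Hmat W i j
  rw [integral_finsetSum_of_continuous fun k ↦ by fun_prop, Finset.mul_sum]
  refine Finset.sum_congr rfl fun k _ ↦ ?_
  rw [pd_Hmat, sphereMeasure, integral_inner_sq_toSphere, finrank_euclideanSpace_fin,
    EuclideanSpace.real_norm_sq_eq]
  rfl

end Weyl

theorem stmt_4_general (N : ℕ) [NeZero N] (W : Fin N → Fin N → Fin N → Fin N → ℝ)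
    (hTrace : ∀ i j, ∑ p, W i p j p = 0) :
    (∫ y : sphere (0 : EuclideanSpace ℝ (Fin N)) 1,
        (∑ i, ∑ j, Hmat N W i j y ^ 2) ∂sphereMeasure N
      = sphereArea N / (2 * N * (N + 2)) *
        ∑ i, ∑ j, ∑ k, ∑ l, (W i k j l + W i l j k) ^ 2) ∧
    (∫ y : sphere (0 : EuclideanSpace ℝ (Fin N)) 1,
        (∑ i, ∑ j, ∑ k, pd N k (Hmat N W i j) y ^ 2) ∂sphereMeasure N
      = sphereArea N / N * ∑ i, ∑ j, ∑ k, ∑ l, (W i k j l + W i l j k) ^ 2) ∧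
    (∫ y : sphere (0 : EuclideanSpace ℝ (Fin N)) 1,
        (∑ i, ∑ j, ∑ k, ∑ l, pd N k (pd N l (Hmat N W i j)) y ^ 2) ∂sphereMeasure N
      = sphereArea N * ∑ i, ∑ j, ∑ k, ∑ l, (W i k j l + W i l j k) ^ 2) := by
  have hH := continuous_Hmat W
  have hpd := continuous_pd_Hmat W
  refine ⟨?_, ?_, ?_⟩
  · rw [integral_finsetSum_finsetSum_of_continuous fun i j ↦ by fun_prop]
    simp only [integral_Hmat_sq W _ _ (hTrace _ _), ← Finset.mul_sum, hessianH_apply]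
  · rw [integral_finsetSum_finsetSum_of_continuous fun i j ↦ by fun_prop]
    simp only [integral_sum_pd_Hmat_sq, ← Finset.mul_sum, hessianH_apply]
  · simp only [pd_pd_Hmat, hessianH_apply, integral_const, smul_eq_mul]
    rfl

theorem stmt_4 (N : ℕ) (hN : 5 ≤ N)
    (W : Fin N → Fin N → Fin N → Fin N → ℝ)
    (hW1 : ∀ i p j q, W i p j q = - W p i j q)
    (hW2 : ∀ i p j q, W i p j q = - W i p q j)
    (hW3 : ∀ i p j q, W i p j q = W j q i p)
    (hBianchi : ∀ i p j q, W i p j q + W i j q p + W i q p j = 0)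
    (hTrace : ∀ p q, ∑ i : Fin N, W i p i q = 0) :
    (∫ y : Metric.sphere (0 : EuclideanSpace ℝ (Fin N)) 1,
        (∑ i : Fin N, ∑ j : Fin N, (Hmat N W i j ↑y) ^ 2) ∂(sphereMeasure N)
      = sphereArea N / (2 * N * (N + 2))
        * ∑ i : Fin N, ∑ j : Fin N, ∑ k : Fin N, ∑ l : Fin N,
            (W i k j l + W i l j k) ^ 2) ∧
    (∫ y : Metric.sphere (0 : EuclideanSpace ℝ (Fin N)) 1,
        (∑ i : Fin N, ∑ j : Fin N, ∑ k : Fin N,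
          (pd N k (Hmat N W i j) ↑y) ^ 2) ∂(sphereMeasure N)
      = sphereArea N / N
        * ∑ i : Fin N, ∑ j : Fin N, ∑ k : Fin N, ∑ l : Fin N,
            (W i k j l + W i l j k) ^ 2) ∧
    (∫ y : Metric.sphere (0 : EuclideanSpace ℝ (Fin N)) 1,
        (∑ i : Fin N, ∑ j : Fin N, ∑ k : Fin N, ∑ l : Fin N,
          (pd N k (pd N l (Hmat N W i j)) ↑y) ^ 2) ∂(sphereMeasure N)
      = sphereArea N
        * ∑ i : Fin N, ∑ j : Fin N, ∑ k : Fin N, ∑ l : Fin N,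
            (W i k j l + W i l j k) ^ 2) := by
  have : NeZero N := ⟨by omega⟩
  exact stmt_4_general N W fun i j ↦ by
    rw [← hTrace i j]
    exact Finset.sum_congr rfl fun p _ ↦ by rw [hW1, hW2, neg_neg]
end
end

section
/- Let N ≥ 1 be an integer and let s, t be real numbers with 0 < s < N and t > s. Then there exists a constant C > 0 (depending only on N, s, t) such that for every x ∈ ℝ^N: if t < N then ∫_{ℝ^N} |x−y|^{s−N} (1+|y|)^{−t} dy ≤ C (1+|x|)^{s−t}; if t = N then ∫_{ℝ^N} |x−y|^{s−N} (1+|y|)^{−t} dy ≤ C (1+|x|)^{s−N} (1 + log(1+|x|)); and if t > N then ∫_{ℝ^N} |x−y|^{s−N} (1+|y|)^{−t} dy ≤ C (1+|x|)^{s−N}. -/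
open scoped BigOperators
open MeasureTheory

/-!
Fix `x`, put `d = dim E` and `R = 1 + ‖x‖`, and split the integral at `‖x - y‖ = R / 2`.

On the ball `‖x - y‖ < R / 2` the weight `(1 + ‖y‖) ^ (-t)` is at most `(R / 2) ^ (-t)`, and the
kernel `‖x - y‖ ^ (s - d)` has integral of order `R ^ s`. Off the ball `‖x - y‖` is comparable to
`max R (1 + ‖y‖)`, so the integrand is dominated by a function of `u = 1 + ‖y‖` alone. In polar
coordinates this leaves `∫ u in (1, ∞), max R u ^ (s - d) * u ^ (d - t - 1)`, where the range
`u > R` contributes a multiple of `R ^ (s - t)` and the range `u ≤ R` contributes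
`R ^ (s - d) * ∫ u in 1..R, u ^ (d - t - 1)`. The sign of `d - t` decides which part dominates.
-/

open Set Metric Module

namespace RieszPotential

section RealPower

variable {R q : ℝ}

lemma rpow_le_add_mul_rpow {a b m M : ℝ} (hm : 0 < m) (hb : 0 < b)
    (hma : m * b ≤ a) (haM : a ≤ M * b) (q : ℝ) :
    a ^ q ≤ (m ^ q + M ^ q) * b ^ q := by
  have ha : 0 < a := (mul_pos hm hb).trans_le hma
  have hM : 0 < M := pos_of_mul_pos_left (ha.trans_le haM) hb.le
  rw [add_mul, ← Real.mul_rpow hm.le hb.le, ← Real.mul_rpow hM.le hb.le]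
  rcases le_total q 0 with hq | hq
  · exact (Real.rpow_le_rpow_of_nonpos (by positivity) hma hq).trans
      (le_add_of_nonneg_right (by positivity))
  · exact (Real.rpow_le_rpow ha.le haM hq).trans (le_add_of_nonneg_left (by positivity))

lemma integral_one_rpow_sub_one_le_of_pos (hq : 0 < q) :
    ∫ u in (1 : ℝ)..R, u ^ (q - 1) ≤ q⁻¹ * R ^ q := by
  rw [integral_rpow (Or.inl (by linarith)), sub_add_cancel, Real.one_rpow, inv_mul_eq_div]
  gcongr
  linarith

lemma integral_one_rpow_sub_one_le_of_neg (hR : 0 < R) (hq : q < 0) :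
    ∫ u in (1 : ℝ)..R, u ^ (q - 1) ≤ (-q)⁻¹ := by
  rw [integral_rpow (Or.inr ⟨by linarith, notMem_uIcc_of_lt one_pos hR⟩), sub_add_cancel,
    Real.one_rpow, ← neg_div_neg_eq, neg_sub, ← one_div]
  have : 0 < -q := neg_pos.2 hq
  gcongr
  linarith [Real.rpow_pos_of_pos hR q]

lemma integral_one_rpow_neg_one (hR : 0 < R) : ∫ u in (1 : ℝ)..R, u ^ (-1 : ℝ) = Real.log R := by
  simp only [Real.rpow_neg_one, integral_inv_of_pos one_pos hR, div_one]

lemma rpow_add_mul_integral_le_of_pos (hR : 0 < R) (hq : 0 < q) (a : ℝ) :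
    R ^ (a + q) + R ^ a * ∫ u in (1 : ℝ)..R, u ^ (q - 1) ≤ (1 + |q|⁻¹) * R ^ (a + q) := by
  grw [integral_one_rpow_sub_one_le_of_pos hq]
  rw [abs_of_pos hq, Real.rpow_add hR]
  linarith

lemma rpow_add_mul_integral_le_of_neg (hR : 1 ≤ R) (hq : q < 0) (a : ℝ) :
    R ^ (a + q) + R ^ a * ∫ u in (1 : ℝ)..R, u ^ (q - 1) ≤ (1 + |q|⁻¹) * R ^ a := by
  have hmono : R ^ (a + q) ≤ R ^ a := Real.rpow_le_rpow_of_exponent_le hR (by linarith)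
  grw [hmono, integral_one_rpow_sub_one_le_of_neg (by linarith) hq]
  rw [abs_of_neg hq]
  linarith

end RealPower

section MaxRpow

variable {R a b : ℝ}

lemma eqOn_max_rpow_mul_rpow_Ioc :
    EqOn (fun u : ℝ => max R u ^ a * u ^ b) (fun u => R ^ a * u ^ b) (Ioc 1 R) :=
  fun u hu => by simp only [max_eq_left hu.2]

lemma eqOn_max_rpow_mul_rpow_Ioi (hR : 0 < R) :
    EqOn (fun u : ℝ => max R u ^ a * u ^ b) (fun u => u ^ (a + b)) (Ioi R) :=
  fun u hu => by simp only [max_eq_right (mem_Ioi.1 hu).le, Real.rpow_add (hR.trans hu)]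

lemma integrableOn_max_rpow_mul_rpow_Ioc (hR : 0 < R) :
    IntegrableOn (fun u : ℝ => max R u ^ a * u ^ b) (Ioc 1 R) := by
  rw [integrableOn_congr_fun eqOn_max_rpow_mul_rpow_Ioc measurableSet_Ioc]
  exact ((intervalIntegral.intervalIntegrable_rpow
    (Or.inr (notMem_uIcc_of_lt one_pos hR))).1).const_mul _

lemma integrableOn_max_rpow_mul_rpow_Ioi (hR : 0 < R) (hab : a + b < -1) :
    IntegrableOn (fun u : ℝ => max R u ^ a * u ^ b) (Ioi R) := by
  rw [integrableOn_congr_fun (eqOn_max_rpow_mul_rpow_Ioi hR) measurableSet_Ioi]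
  exact integrableOn_Ioi_rpow_of_lt hab hR

lemma integrableOn_max_rpow_mul_rpow (hR : 1 ≤ R) (hab : a + b < -1) :
    IntegrableOn (fun u : ℝ => max R u ^ a * u ^ b) (Ioi 1) := by
  rw [← Ioc_union_Ioi_eq_Ioi hR]
  exact (integrableOn_max_rpow_mul_rpow_Ioc (by linarith)).union
    (integrableOn_max_rpow_mul_rpow_Ioi (by linarith) hab)

lemma setIntegral_max_rpow_mul_rpow (hR : 1 ≤ R) (hab : a + b < -1) :
    ∫ u in Ioi 1, max R u ^ a * u ^ b =
      R ^ a * (∫ u in (1 : ℝ)..R, u ^ b) + -R ^ (a + b + 1) / (a + b + 1) := by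
  have hR0 : 0 < R := by linarith
  rw [← Ioc_union_Ioi_eq_Ioi hR, setIntegral_union (Ioc_disjoint_Ioi le_rfl) measurableSet_Ioi
      (integrableOn_max_rpow_mul_rpow_Ioc hR0) (integrableOn_max_rpow_mul_rpow_Ioi hR0 hab),
    setIntegral_congr_fun measurableSet_Ioc eqOn_max_rpow_mul_rpow_Ioc,
    setIntegral_congr_fun measurableSet_Ioi (eqOn_max_rpow_mul_rpow_Ioi hR0),
    integral_const_mul, ← intervalIntegral.integral_of_le hR, integral_Ioi_rpow_of_lt hab hR0]

lemma eqOn_rpow_mul_max_rpow_mul_rpow (p : ℝ) :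
    EqOn (fun u : ℝ => u ^ p * (max R u ^ a * u ^ b)) (fun u => max R u ^ a * u ^ (p + b))
      (Ioi 1) :=
  fun u hu => by simp only [Real.rpow_add (one_pos.trans hu), mul_left_comm]

lemma integrableOn_rpow_mul_max_rpow_mul_rpow {p : ℝ} (hR : 1 ≤ R) (hab : a + b < -(p + 1)) :
    IntegrableOn (fun u : ℝ => u ^ p * (max R u ^ a * u ^ b)) (Ioi 1) := by
  rw [integrableOn_congr_fun (eqOn_rpow_mul_max_rpow_mul_rpow p) measurableSet_Ioi]
  exact integrableOn_max_rpow_mul_rpow hR (by linarith)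

end MaxRpow

section Translation

lemma integrableOn_Ioi_comp_const_add {f : ℝ → ℝ} (a b : ℝ) :
    IntegrableOn (fun u => f (a + u)) (Ioi b) ↔ IntegrableOn f (Ioi (a + b)) := by
  simpa only [preimage_const_add_Ioi, add_sub_cancel_left, Function.comp_def] using
    (measurePreserving_add_left volume a).integrableOn_comp_preimage
      (measurableEmbedding_addLeft a) (f := f) (s := Ioi (a + b))

lemma setIntegral_Ioi_comp_const_add (f : ℝ → ℝ) (a b : ℝ) :
    ∫ u in Ioi b, f (a + u) = ∫ u in Ioi (a + b), f u := by
  simpa only [preimage_const_add_Ioi, add_sub_cancel_left] using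
    (measurePreserving_add_left volume a).setIntegral_preimage_emb
      (measurableEmbedding_addLeft a) f (Ioi (a + b))

end Translation

section OneAdd

variable {g : ℝ → ℝ} {p : ℝ} (hp : 0 ≤ p) (hg0 : ∀ u, 1 < u → 0 ≤ g u)
include hp hg0

lemma rpow_mul_comp_one_add_mem_Icc {r : ℝ} (hr : 0 < r) :
    r ^ p * g (1 + r) ∈ Icc 0 ((1 + r) ^ p * g (1 + r)) := by
  have hgr : 0 ≤ g (1 + r) := hg0 _ (by linarith)
  exact ⟨by positivity, by gcongr; linarith⟩

variable (hint : IntegrableOn (fun u => u ^ p * g u) (Ioi 1))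
include hint

lemma integrableOn_rpow_mul_comp_one_add (hg : Measurable g) :
    IntegrableOn (fun r => r ^ p * g (1 + r)) (Ioi 0) := by
  refine Integrable.mono' ((integrableOn_Ioi_comp_const_add 1 0).2 (by rwa [add_zero]))
    (by fun_prop) (ae_restrict_of_forall_mem measurableSet_Ioi fun r hr => ?_)
  obtain ⟨hnonneg, hle⟩ := rpow_mul_comp_one_add_mem_Icc hp hg0 hr
  rwa [Real.norm_of_nonneg hnonneg]

lemma setIntegral_rpow_mul_comp_one_add_le :
    ∫ r in Ioi 0, r ^ p * g (1 + r) ≤ ∫ u in Ioi 1, u ^ p * g u := by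
  have hshift := setIntegral_Ioi_comp_const_add (fun u => u ^ p * g u) 1 0
  have hshift_int := integrableOn_Ioi_comp_const_add (f := fun u => u ^ p * g u) 1 0
  rw [add_zero] at hshift hshift_int
  rw [← hshift]
  refine integral_mono_of_nonneg ?_ (hshift_int.2 hint) ?_ <;>
    refine ae_restrict_of_forall_mem measurableSet_Ioi fun r hr => ?_
  · exact (rpow_mul_comp_one_add_mem_Icc hp hg0 hr).1
  · exact (rpow_mul_comp_one_add_mem_Icc hp hg0 hr).2

end OneAdd

variable {E : Type*} [NormedAddCommGroup E]

section Geometry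

variable {x y : E}

lemma half_one_add_norm_le_of_mem_ball (hy : y ∈ ball x ((1 + ‖x‖) / 2)) :
    (1 + ‖x‖) / 2 ≤ 1 + ‖y‖ := by
  have hxy : ‖x - y‖ < (1 + ‖x‖) / 2 := by rwa [← mem_ball_iff_norm']
  linarith [norm_sub_norm_le x y]

lemma norm_sub_rpow_le_of_notMem_ball (hy : y ∉ ball x ((1 + ‖x‖) / 2)) (q : ℝ) :
    ‖x - y‖ ^ q ≤ ((1 / 3) ^ q + 2 ^ q) * max (1 + ‖x‖) (1 + ‖y‖) ^ q := by
  have hxy : (1 + ‖x‖) / 2 ≤ ‖x - y‖ := by rwa [mem_ball_iff_norm', not_lt] at hy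
  have hyx : ‖y‖ ≤ ‖x - y‖ + ‖x‖ := by linarith [norm_sub_norm_le y x, norm_sub_rev x y]
  refine rpow_le_add_mul_rpow (by norm_num) (lt_max_of_lt_left (by positivity)) ?_ ?_ q
  · rw [← le_div_iff₀' (by norm_num)]
    have := norm_nonneg (x - y)
    exact max_le (by linarith) (by linarith)
  · linarith [norm_sub_le x y, le_max_left (1 + ‖x‖) (1 + ‖y‖), le_max_right (1 + ‖x‖) (1 + ‖y‖)]

lemma norm_sub_rpow_mul_le_of_mem_ball {t : ℝ} (ht : 0 ≤ t) (hy : y ∈ ball x ((1 + ‖x‖) / 2))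
    (q : ℝ) :
    ‖x - y‖ ^ q * (1 + ‖y‖) ^ (-t) ≤ ((1 + ‖x‖) / 2) ^ (-t) * ‖x - y‖ ^ q := by
  rw [mul_comm]
  gcongr ?_ * _
  exact Real.rpow_le_rpow_of_nonpos (by positivity) (half_one_add_norm_le_of_mem_ball hy)
    (by linarith)

lemma norm_sub_rpow_mul_le_of_notMem_ball (hy : y ∉ ball x ((1 + ‖x‖) / 2)) (q b : ℝ) :
    ‖x - y‖ ^ q * (1 + ‖y‖) ^ b ≤
      ((1 / 3) ^ q + 2 ^ q) * (max (1 + ‖x‖) (1 + ‖y‖) ^ q * (1 + ‖y‖) ^ b) := by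
  rw [← mul_assoc]
  gcongr
  exact norm_sub_rpow_le_of_notMem_ball hy q

end Geometry

variable [NormedSpace ℝ E] [FiniteDimensional ℝ E] [MeasurableSpace E] [BorelSpace E]
  (μ : Measure E) [μ.IsAddHaarMeasure]

section PolarCoordinates

variable [Nontrivial E]

variable (E) in
omit [MeasurableSpace E] [BorelSpace E] in
lemma finrank_sub_one_nonneg : 0 ≤ (finrank ℝ E : ℝ) - 1 :=
  sub_nonneg.2 (Nat.one_le_cast.2 finrank_pos)

lemma integral_fun_norm_eq_toSphere_mul (f : ℝ → ℝ) :
    ∫ y, f ‖y‖ ∂μ =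
      μ.toSphere.real univ * ∫ r in Ioi 0, r ^ ((finrank ℝ E : ℝ) - 1) * f r := by
  simp only [integral_fun_norm_addHaar, Measure.toSphere_real_apply_univ, nsmul_eq_mul,
    smul_eq_mul, mul_assoc, ← Real.rpow_natCast, Nat.cast_pred (finrank_pos (R := ℝ) (M := E))]

lemma integrable_fun_norm_iff {f : ℝ → ℝ} :
    Integrable (fun y => f ‖y‖) μ ↔
      IntegrableOn (fun r => r ^ ((finrank ℝ E : ℝ) - 1) * f r) (Ioi 0) := by
  simp only [integrable_fun_norm_addHaar, smul_eq_mul, ← Real.rpow_natCast,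
    Nat.cast_pred (finrank_pos (R := ℝ) (M := E))]

lemma setIntegral_ball_fun_norm_sub (f : ℝ → ℝ) (x : E) (ρ : ℝ) :
    ∫ y in ball x ρ, f ‖x - y‖ ∂μ =
      μ.toSphere.real univ * ∫ r in Ioo 0 ρ, r ^ ((finrank ℝ E : ℝ) - 1) * f r := by
  have hball : (ball x ρ).indicator (fun y => f ‖x - y‖) =
      fun y => (Iio ρ).indicator f ‖x - y‖ := by
    ext y
    simp only [indicator, mem_ball_iff_norm', mem_Iio]
  rw [← integral_indicator measurableSet_ball, hball,
    integral_sub_left_eq_self (fun y => (Iio ρ).indicator f ‖y‖),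
    integral_fun_norm_eq_toSphere_mul, ← Ioi_inter_Iio, ← setIntegral_indicator measurableSet_Iio]
  simp only [indicator_mul_right]

variable {s ρ : ℝ}

lemma integrableOn_ball_norm_sub_rpow (hs : 0 < s) (x : E) :
    IntegrableOn (fun y => ‖x - y‖ ^ (s - finrank ℝ E)) (ball x ρ) μ := by
  have hball : IntegrableOn (fun y : E => ‖y‖ ^ (s - finrank ℝ E)) (ball 0 ρ) μ := by
    refine integrableOn_ball_of_norm_le_rpow (C := 1) (α := finrank ℝ E - s) finrank_pos
      (by linarith) (.of_forall fun y => ?_) (measurable_norm.pow_const _).aestronglyMeasurable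
    rw [neg_sub, one_mul, Real.norm_of_nonneg (by positivity)]
  have hpre : (fun y => x - y) ⁻¹' ball 0 ρ = ball x ρ := by
    ext y
    rw [mem_preimage, mem_ball_zero_iff, mem_ball_iff_norm']
  rw [← hpre]
  exact ((μ.measurePreserving_sub_left x).integrableOn_comp_preimage
    (MeasurableEquiv.subLeft x).measurableEmbedding).2 hball

lemma setIntegral_ball_norm_sub_rpow (hs : 0 < s) (hρ : 0 ≤ ρ) (x : E) :
    ∫ y in ball x ρ, ‖x - y‖ ^ (s - finrank ℝ E) ∂μ = μ.toSphere.real univ * (ρ ^ s / s) := by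
  rw [setIntegral_ball_fun_norm_sub μ (· ^ (s - finrank ℝ E)),
    setIntegral_congr_fun (g := (· ^ (s - 1))) measurableSet_Ioo fun r hr => ?_,
    ← integral_Ioc_eq_integral_Ioo, ← intervalIntegral.integral_of_le hρ,
    integral_rpow (Or.inl (by linarith)), sub_add_cancel, Real.zero_rpow hs.ne', sub_zero]
  simp only [← Real.rpow_add hr.1]
  ring_nf

section MaxOneAddNorm

variable {R a b : ℝ}

lemma integrable_max_rpow_mul_one_add_norm_rpow (hR : 1 ≤ R) (hab : a + b < -finrank ℝ E) :
    Integrable (fun y => max R (1 + ‖y‖) ^ a * (1 + ‖y‖) ^ b) μ :=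
  (integrable_fun_norm_iff μ (f := fun r => max R (1 + r) ^ a * (1 + r) ^ b)).2 <|
    integrableOn_rpow_mul_comp_one_add (finrank_sub_one_nonneg E)
      (g := fun u => max R u ^ a * u ^ b)
      (fun u hu => by positivity) (integrableOn_rpow_mul_max_rpow_mul_rpow hR (by linarith))
      (by fun_prop)

lemma integral_max_rpow_mul_one_add_norm_rpow_le (hR : 1 ≤ R) (hab : a + b < -finrank ℝ E) :
    ∫ y, max R (1 + ‖y‖) ^ a * (1 + ‖y‖) ^ b ∂μ ≤
      μ.toSphere.real univ * (R ^ a * (∫ u in (1 : ℝ)..R, u ^ (finrank ℝ E + b - 1)) +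
        -R ^ (a + b + finrank ℝ E) / (a + b + finrank ℝ E)) := by
  rw [integral_fun_norm_eq_toSphere_mul μ (fun r => max R (1 + r) ^ a * (1 + r) ^ b)]
  refine mul_le_mul_of_nonneg_left ?_ measureReal_nonneg
  refine (setIntegral_rpow_mul_comp_one_add_le (finrank_sub_one_nonneg E)
    (g := fun u => max R u ^ a * u ^ b) (fun u hu => by positivity)
    (integrableOn_rpow_mul_max_rpow_mul_rpow hR (by linarith))).trans_eq ?_
  rw [setIntegral_congr_fun measurableSet_Ioi (eqOn_rpow_mul_max_rpow_mul_rpow _),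
    setIntegral_max_rpow_mul_rpow hR (by linarith)]
  ring_nf

end MaxOneAddNorm

end PolarCoordinates

section Estimates

variable [Nontrivial E] {s t : ℝ}

lemma integrableOn_ball_norm_sub_rpow_mul (hs : 0 < s) (ht : 0 ≤ t) (x : E) :
    IntegrableOn (fun y => ‖x - y‖ ^ (s - finrank ℝ E) * (1 + ‖y‖) ^ (-t))
      (ball x ((1 + ‖x‖) / 2)) μ := by
  refine Integrable.mono'
    ((integrableOn_ball_norm_sub_rpow μ hs x).const_mul (((1 + ‖x‖) / 2) ^ (-t)))
    (by fun_prop) (ae_restrict_of_forall_mem measurableSet_ball fun y hy => ?_)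
  rw [Real.norm_of_nonneg (by positivity)]
  exact norm_sub_rpow_mul_le_of_mem_ball ht hy _

lemma setIntegral_ball_norm_sub_rpow_mul_le (hs : 0 < s) (ht : 0 ≤ t) (x : E) :
    ∫ y in ball x ((1 + ‖x‖) / 2), ‖x - y‖ ^ (s - finrank ℝ E) * (1 + ‖y‖) ^ (-t) ∂μ ≤
      μ.toSphere.real univ / s * ((1 + ‖x‖) / 2) ^ (s - t) := by
  calc
    _ ≤ ∫ y in ball x ((1 + ‖x‖) / 2),
          ((1 + ‖x‖) / 2) ^ (-t) * ‖x - y‖ ^ (s - finrank ℝ E) ∂μ :=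
      setIntegral_mono_on (integrableOn_ball_norm_sub_rpow_mul μ hs ht x)
        ((integrableOn_ball_norm_sub_rpow μ hs x).const_mul _) measurableSet_ball
        fun y hy => norm_sub_rpow_mul_le_of_mem_ball ht hy _
    _ = μ.toSphere.real univ / s * ((1 + ‖x‖) / 2) ^ (s - t) := by
      rw [integral_const_mul, setIntegral_ball_norm_sub_rpow μ hs (by positivity),
        sub_eq_add_neg s t, Real.rpow_add (by positivity)]
      ring

lemma integrableOn_compl_ball_norm_sub_rpow_mul (hst : s < t) (x : E) :
    IntegrableOn (fun y => ‖x - y‖ ^ (s - finrank ℝ E) * (1 + ‖y‖) ^ (-t))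
      (ball x ((1 + ‖x‖) / 2))ᶜ μ := by
  have hmajorant := integrable_max_rpow_mul_one_add_norm_rpow μ (R := 1 + ‖x‖)
    (a := s - finrank ℝ E) (b := -t) (by simp) (by linarith)
  refine Integrable.mono' (hmajorant.integrableOn.const_mul
    ((1 / 3) ^ (s - finrank ℝ E) + 2 ^ (s - finrank ℝ E))) (by fun_prop)
    (ae_restrict_of_forall_mem measurableSet_ball.compl fun y hy => ?_)
  rw [Real.norm_of_nonneg (by positivity)]
  exact norm_sub_rpow_mul_le_of_notMem_ball hy _ _

lemma setIntegral_compl_ball_norm_sub_rpow_mul_le (hst : s < t) (x : E) :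
    ∫ y in (ball x ((1 + ‖x‖) / 2))ᶜ, ‖x - y‖ ^ (s - finrank ℝ E) * (1 + ‖y‖) ^ (-t) ∂μ ≤
      ((1 / 3) ^ (s - finrank ℝ E) + 2 ^ (s - finrank ℝ E)) * (μ.toSphere.real univ *
        ((1 + ‖x‖) ^ (s - t) / (t - s) + (1 + ‖x‖) ^ (s - finrank ℝ E) *
          ∫ u in (1 : ℝ)..1 + ‖x‖, u ^ (finrank ℝ E - t - 1))) := by
  have hab : s - finrank ℝ E + -t < -finrank ℝ E := by linarith
  have hmajorant := integrable_max_rpow_mul_one_add_norm_rpow μ (R := 1 + ‖x‖) (by simp) hab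
  calc
    _ ≤ ∫ y in (ball x ((1 + ‖x‖) / 2))ᶜ, ((1 / 3) ^ (s - finrank ℝ E) + 2 ^ (s - finrank ℝ E)) *
          (max (1 + ‖x‖) (1 + ‖y‖) ^ (s - finrank ℝ E) * (1 + ‖y‖) ^ (-t)) ∂μ :=
      setIntegral_mono_on (integrableOn_compl_ball_norm_sub_rpow_mul μ hst x)
        (hmajorant.integrableOn.const_mul _) measurableSet_ball.compl
        fun y hy => norm_sub_rpow_mul_le_of_notMem_ball hy _ _
    _ ≤ ∫ y, ((1 / 3) ^ (s - finrank ℝ E) + 2 ^ (s - finrank ℝ E)) *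
          (max (1 + ‖x‖) (1 + ‖y‖) ^ (s - finrank ℝ E) * (1 + ‖y‖) ^ (-t)) ∂μ :=
      setIntegral_le_integral (hmajorant.const_mul _) (.of_forall fun y => by positivity)
    _ ≤ _ := by
      rw [integral_const_mul]
      refine mul_le_mul_of_nonneg_left ?_ (by positivity)
      refine (integral_max_rpow_mul_one_add_norm_rpow_le μ (by simp) hab).trans_eq ?_
      rw [show s - finrank ℝ E + -t + finrank ℝ E = -(t - s) by ring, neg_div_neg_eq, neg_sub,
        ← sub_eq_add_neg, add_comm]

lemma integrable_norm_sub_rpow_mul (hs : 0 < s) (hst : s < t) (x : E) :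
    Integrable (fun y => ‖x - y‖ ^ (s - finrank ℝ E) * (1 + ‖y‖) ^ (-t)) μ := by
  rw [← integrableOn_univ, ← union_compl_self (ball x ((1 + ‖x‖) / 2))]
  exact (integrableOn_ball_norm_sub_rpow_mul μ hs (hs.trans hst).le x).union
    (integrableOn_compl_ball_norm_sub_rpow_mul μ hst x)

lemma exists_integral_norm_sub_rpow_mul_le (hs : 0 < s) (hst : s < t) :
    ∃ C, 0 < C ∧ ∀ x : E, ∫ y, ‖x - y‖ ^ (s - finrank ℝ E) * (1 + ‖y‖) ^ (-t) ∂μ ≤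
      C * ((1 + ‖x‖) ^ (s - t) + (1 + ‖x‖) ^ (s - finrank ℝ E) *
        ∫ u in (1 : ℝ)..1 + ‖x‖, u ^ (finrank ℝ E - t - 1)) := by
  set K := μ.toSphere.real univ
  have : NeZero μ.toSphere := ⟨μ.toSphere_ne_zero⟩
  have : 0 < K := measureReal_univ_pos
  have : 0 < t - s := sub_pos.2 hst
  set c : ℝ := (1 / 3) ^ (s - finrank ℝ E) + 2 ^ (s - finrank ℝ E)
  set A : ℝ := K / s / 2 ^ (s - t) + c * K / (t - s)
  refine ⟨A + c * K, by positivity, fun x => ?_⟩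
  set P := (1 + ‖x‖) ^ (s - t)
  set J := (1 + ‖x‖) ^ (s - finrank ℝ E) * ∫ u in (1 : ℝ)..1 + ‖x‖, u ^ (finrank ℝ E - t - 1)
  have hJ : 0 ≤ J := mul_nonneg (by positivity) <| intervalIntegral.integral_nonneg (by simp)
    fun u hu => Real.rpow_nonneg (zero_le_one.trans hu.1) _
  have hP : ((1 + ‖x‖) / 2) ^ (s - t) = P / 2 ^ (s - t) :=
    Real.div_rpow (by positivity) zero_le_two _
  calc
    _ = _ := (integral_add_compl measurableSet_ball (integrable_norm_sub_rpow_mul μ hs hst x)).symm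
    _ ≤ K / s * (P / 2 ^ (s - t)) + c * (K * (P / (t - s) + J)) := by
      rw [← hP]
      exact add_le_add (setIntegral_ball_norm_sub_rpow_mul_le μ hs (hs.trans hst).le x)
        (setIntegral_compl_ball_norm_sub_rpow_mul_le μ hst x)
    _ = A * P + c * K * J := by ring
    _ ≤ (A + c * K) * (P + J) := by
      have : 0 ≤ A * J + c * K * P := by positivity
      linarith

end Estimates

end RieszPotential

open RieszPotential

theorem stmt_8_general {E : Type*} [NormedAddCommGroup E] [NormedSpace ℝ E] [Nontrivial E]
    [FiniteDimensional ℝ E] [MeasurableSpace E] [BorelSpace E] (μ : Measure E)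
    [μ.IsAddHaarMeasure] {s t : ℝ} (hs : 0 < s) (hst : s < t) :
    ∃ C : ℝ, 0 < C ∧ ∀ x : E,
      Integrable (fun y => ‖x - y‖ ^ (s - finrank ℝ E) * (1 + ‖y‖) ^ (-t)) μ ∧
      (t < finrank ℝ E →
        ∫ y, ‖x - y‖ ^ (s - finrank ℝ E) * (1 + ‖y‖) ^ (-t) ∂μ ≤ C * (1 + ‖x‖) ^ (s - t)) ∧
      (t = finrank ℝ E →
        ∫ y, ‖x - y‖ ^ (s - finrank ℝ E) * (1 + ‖y‖) ^ (-t) ∂μ ≤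
          C * (1 + ‖x‖) ^ (s - finrank ℝ E) * (1 + Real.log (1 + ‖x‖))) ∧
      (finrank ℝ E < t →
        ∫ y, ‖x - y‖ ^ (s - finrank ℝ E) * (1 + ‖y‖) ^ (-t) ∂μ ≤
          C * (1 + ‖x‖) ^ (s - finrank ℝ E)) := by
  obtain ⟨C, hC, hbound⟩ := exists_integral_norm_sub_rpow_mul_le μ hs hst
  have hexp : s - t = s - finrank ℝ E + (finrank ℝ E - t) := by ring
  -- For t = finrank ℝ E the junk value 0⁻¹ = 0 makes this constant equal to C.
  refine ⟨C * (1 + |finrank ℝ E - t|⁻¹), by positivity, fun x =>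
    ⟨integrable_norm_sub_rpow_mul μ hs hst x, fun ht => ?_, fun ht => ?_, fun ht => ?_⟩⟩ <;>
    refine (hbound x).trans ?_ <;> rw [mul_assoc C, hexp]
  · grw [rpow_add_mul_integral_le_of_pos (by positivity) (sub_pos.2 ht)]
  · rw [← ht, sub_self, zero_sub, integral_one_rpow_neg_one (by positivity)]
    simp only [abs_zero, inv_zero, add_zero, one_mul]
    linarith
  · grw [rpow_add_mul_integral_le_of_neg (by simp) (sub_neg.2 ht)]

theorem stmt_8 (N : ℕ) (hN : 1 ≤ N) (s t : ℝ)
    (hs : 0 < s) (hsN : s < N) (hts : s < t) :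
    ∃ C : ℝ, 0 < C ∧ ∀ x : EuclideanSpace ℝ (Fin N),
      ((t < N →
        (∫ y : EuclideanSpace ℝ (Fin N),
            ‖x - y‖ ^ (s - N) * (1 + ‖y‖) ^ (-t))
          ≤ C * (1 + ‖x‖) ^ (s - t)) ∧
      (t = N →
        (∫ y : EuclideanSpace ℝ (Fin N),
            ‖x - y‖ ^ (s - N) * (1 + ‖y‖) ^ (-t))
          ≤ C * (1 + ‖x‖) ^ (s - N) * (1 + Real.log (1 + ‖x‖))) ∧
      ((N : ℝ) < t →
        (∫ y : EuclideanSpace ℝ (Fin N),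
            ‖x - y‖ ^ (s - N) * (1 + ‖y‖) ^ (-t))
          ≤ C * (1 + ‖x‖) ^ (s - N))) := by
  have : Nonempty (Fin N) := ⟨⟨0, hN⟩⟩
  obtain ⟨C, hC, h⟩ := stmt_8_general (volume : Measure (EuclideanSpace ℝ (Fin N))) hs hts
  exact ⟨C, hC, fun x => by simpa only [finrank_euclideanSpace_fin] using (h x).2⟩
end

section
/- Let N ≥ 1 be an integer and let s, k be real numbers with 0 < s < N, 0 < k < N and s + k < N. Then there exists a constant C > 0 (depending only on N, s, k) such that for every r ≥ 1 and every y ∈ ℝ^N: ∫_{B_r} |y−z|^{s−N} (1+|z|)^{k−N} dz ≤ C r^k (1+|y|)^{s−N}, where B_r = {z ∈ ℝ^N : |z| < r} is the ball of radius r centered at the origin. -/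
open scoped BigOperators
open MeasureTheory

/-!
Put `w = 1 + ‖y‖` and split the ball `B_r` at distance `w / 2` from `y`. Where `‖y - z‖ < w / 2`,
the weight `1 + ‖z‖` is comparable to `w`, and the Riesz kernel integrates to a multiple of `w ^ s`,
giving `w ^ k * w ^ (s - d)`; this part is nonempty only if `w ≤ 2 * (1 + r)`, so that `w ^ k` is
absorbed into `r ^ k`. Elsewhere the kernel is at most `(w / 2) ^ (s - d)`, and the weight
integrates to at most a multiple of `(1 + r) ^ k` in polar coordinates.
-/

open Metric Module Set

theorem rpow_le_rpow_abs_mul_rpow {a b c : ℝ} (hb : 0 < b) (hc : 0 < c) (hab : a ≤ c * b)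
    (hba : b ≤ c * a) (p : ℝ) : a ^ p ≤ c ^ |p| * b ^ p := by
  have ha : 0 < a := pos_of_mul_pos_right (hb.trans_le hba) hc.le
  rcases le_total 0 p with hp | hp
  · rw [abs_of_nonneg hp, ← Real.mul_rpow hc.le hb.le]
    exact Real.rpow_le_rpow ha.le hab hp
  · rw [abs_of_nonpos hp, Real.rpow_neg hc.le, ← Real.inv_rpow hc.le,
      ← Real.mul_rpow (by positivity) hb.le]
    exact Real.rpow_le_rpow_of_nonpos (by positivity) ((inv_mul_le_iff₀ hc).2 hba) hp

theorem pow_pred_mul_rpow_sub {d : ℕ} (hd : d ≠ 0) {t : ℝ} (ht : 0 < t) (s : ℝ) :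
    t ^ (d - 1) * t ^ (s - d) = t ^ (s - 1) := by
  rw [← Real.rpow_natCast, ← Real.rpow_add ht, Nat.cast_pred (Nat.pos_of_ne_zero hd)]
  congr 1
  ring

theorem intervalIntegral_pow_pred_mul_one_add_rpow_le {d : ℕ} (hd : d ≠ 0) {k : ℝ} (hk : 0 < k)
    {r : ℝ} (hr : 0 ≤ r) :
    ∫ t in (0 : ℝ)..r, t ^ (d - 1) * (1 + t) ^ (k - d) ≤ (1 + r) ^ k / k := by
  have cont (p : ℝ) : ContinuousOn (fun t : ℝ ↦ (1 + t) ^ p) (uIcc 0 r) :=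
    (by fun_prop : ContinuousOn (fun t : ℝ ↦ 1 + t) _).rpow_const fun t ht ↦
      .inl (by rw [uIcc_of_le hr] at ht; linarith [ht.1])
  calc
    _ ≤ ∫ t in (0 : ℝ)..r, (1 + t) ^ (k - 1) := by
      refine intervalIntegral.integral_mono_on hr
        ((continuous_pow _).continuousOn.mul (cont _)).intervalIntegrable
        (cont _).intervalIntegrable fun t ht ↦ ?_
      have ht₀ : 0 ≤ t := ht.1
      rw [← pow_pred_mul_rpow_sub hd (by positivity : 0 < 1 + t)]
      gcongr
      linarith
    _ = ((1 + r) ^ k - 1) / k := by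
      rw [intervalIntegral.integral_comp_add_left (· ^ (k - 1)),
        integral_rpow (.inl (by linarith)), add_zero, sub_add_cancel, Real.one_rpow]
    _ ≤ (1 + r) ^ k / k := by gcongr; linarith

section Radial

variable {E : Type*} [NormedAddCommGroup E] [NormedSpace ℝ E] [FiniteDimensional ℝ E]
  [Nontrivial E] [MeasurableSpace E] [BorelSpace E] (μ : Measure E) [μ.IsAddHaarMeasure]

theorem setIntegral_ball_fun_norm_sub {F : Type*} [NormedAddCommGroup F] [NormedSpace ℝ F]
    (f : ℝ → F) (y : E) {R : ℝ} (hR : 0 ≤ R) :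
    ∫ z in ball y R, f ‖y - z‖ ∂μ =
      μ.toSphere.real univ • ∫ t in (0 : ℝ)..R, t ^ (finrank ℝ E - 1) • f t := by
  have indicator_ball : (ball y R).indicator (fun z ↦ f ‖y - z‖) =
      fun z ↦ (Iio R).indicator f ‖y - z‖ := by
    ext z
    simp [indicator, dist_eq_norm_sub']
  have radial_indicator : (fun t : ℝ ↦ t ^ (finrank ℝ E - 1) • (Iio R).indicator f t) =
      (Iio R).indicator fun t ↦ t ^ (finrank ℝ E - 1) • f t := by
    ext t
    simp [indicator]
  rw [← integral_indicator measurableSet_ball, indicator_ball,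
    integral_sub_left_eq_self (fun x ↦ (Iio R).indicator f ‖x‖) μ y, integral_fun_norm_addHaar,
    radial_indicator, setIntegral_indicator measurableSet_Iio, Ioi_inter_Iio,
    ← integral_Ioc_eq_integral_Ioo, ← intervalIntegral.integral_of_le hR,
    Measure.toSphere_real_apply_univ, ← Nat.cast_smul_eq_nsmul ℝ, smul_smul]

theorem setIntegral_ball_norm_sub_rpow {s : ℝ} (hs : 0 < s) (y : E) {R : ℝ} (hR : 0 ≤ R) :
    ∫ z in ball y R, ‖y - z‖ ^ (s - finrank ℝ E) ∂μ = μ.toSphere.real univ * (R ^ s / s) := by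
  have radial_integral :
      ∫ t in (0 : ℝ)..R, t ^ (finrank ℝ E - 1) * t ^ (s - finrank ℝ E) = R ^ s / s := by
    calc
      _ = ∫ t in (0 : ℝ)..R, t ^ (s - 1) := intervalIntegral.integral_congr_uIoo fun t ht ↦
        pow_pred_mul_rpow_sub finrank_pos.ne' (by simpa [hR] using ht.1) s
      _ = R ^ s / s := by
        rw [integral_rpow (.inl (by linarith)), sub_add_cancel, Real.zero_rpow hs.ne', sub_zero]
  rw [setIntegral_ball_fun_norm_sub μ (· ^ (s - finrank ℝ E)) y hR]
  simp only [smul_eq_mul, radial_integral]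

theorem integrableOn_ball_norm_sub_rpow {s : ℝ} (hs : 0 < s) (y : E) (R : ℝ) :
    IntegrableOn (fun z ↦ ‖y - z‖ ^ (s - finrank ℝ E)) (ball y R) μ := by
  have centered : IntegrableOn (fun x : E ↦ ‖x‖ ^ (s - finrank ℝ E)) (ball 0 R) μ := by
    have radial : EqOn (fun t : ℝ ↦ t ^ (finrank ℝ E - 1) * t ^ (s - finrank ℝ E))
        (· ^ (s - 1)) (Ioo 0 R) :=
      fun t ht ↦ pow_pred_mul_rpow_sub finrank_pos.ne' ht.1 s
    refine (integrableOn_fun_norm_addHaar μ (f := (· ^ (s - finrank ℝ E)))).2 <|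
      (integrableOn_congr_fun radial measurableSet_Ioo).2 ?_
    rcases le_total R 0 with hR | hR
    · simp [Ioo_eq_empty hR.not_gt]
    · rw [← intervalIntegrable_iff_integrableOn_Ioo_of_le hR]
      exact intervalIntegral.intervalIntegrable_rpow' (by linarith)
  have preimage_ball : (y - ·) ⁻¹' ball (0 : E) R = ball y R := by
    ext z
    rw [mem_preimage, mem_ball_zero_iff, mem_ball_iff_norm']
  rw [← preimage_ball]
  exact ((μ.measurePreserving_sub_left y).integrableOn_comp_preimage
    (MeasurableEquiv.subLeft y).measurableEmbedding).2 centered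

theorem setIntegral_ball_one_add_norm_rpow_le {k : ℝ} (hk : 0 < k) {r : ℝ} (hr : 0 ≤ r) :
    ∫ z in ball (0 : E) r, (1 + ‖z‖) ^ (k - finrank ℝ E) ∂μ ≤
      μ.toSphere.real univ * ((1 + r) ^ k / k) := by
  calc
    _ = μ.toSphere.real univ *
        ∫ t in (0 : ℝ)..r, t ^ (finrank ℝ E - 1) * (1 + t) ^ (k - finrank ℝ E) := by
      simpa using setIntegral_ball_fun_norm_sub μ (fun t ↦ (1 + t) ^ (k - finrank ℝ E)) 0 hr
    _ ≤ _ := by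
      gcongr
      exact intervalIntegral_pow_pred_mul_one_add_rpow_le finrank_pos.ne' hk hr

end Radial

theorem continuous_one_add_norm_rpow {E : Type*} [SeminormedAddCommGroup E] (p : ℝ) :
    Continuous fun z : E ↦ (1 + ‖z‖) ^ p :=
  (by fun_prop : Continuous fun z : E ↦ 1 + ‖z‖).rpow_const fun _ ↦ .inl (by positivity)

section WeightedRieszKernel

variable {E : Type*} [NormedAddCommGroup E] [NormedSpace ℝ E]

/-- The Riesz kernel of order `s` centred at `y`, weighted by `(1 + ‖z‖) ^ (k - d)` with `d` the
dimension of `E`: the integrand of the potential to be estimated. For `s < d`, its value at `z = y`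
is `0` by the convention `0 ^ p = 0` for `p ≠ 0`. -/
noncomputable def weightedRieszKernel (s k : ℝ) (y z : E) : ℝ :=
  ‖y - z‖ ^ (s - finrank ℝ E) * (1 + ‖z‖) ^ (k - finrank ℝ E)

theorem weightedRieszKernel_nonneg (s k : ℝ) (y z : E) : 0 ≤ weightedRieszKernel s k y z := by
  unfold weightedRieszKernel
  positivity

variable [FiniteDimensional ℝ E] [Nontrivial E] [MeasurableSpace E] [BorelSpace E] (μ : Measure E)
  [μ.IsAddHaarMeasure] {s k r : ℝ}

theorem integrableOn_ball_weightedRieszKernel (hs : 0 < s) (k : ℝ) (x y : E) (r : ℝ) :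
    IntegrableOn (weightedRieszKernel s k y) (ball x r) μ :=
  ((integrableOn_ball_norm_sub_rpow μ hs y (r + dist x y)).mono_set
    (ball_subset_ball' le_rfl)).mul_continuousOn_of_subset
    (continuous_one_add_norm_rpow (k - finrank ℝ E)).continuousOn measurableSet_ball
    (isCompact_closedBall x r) ball_subset_closedBall

theorem setIntegral_ball_half_weightedRieszKernel_le (hs : 0 < s) (k : ℝ) (y : E) :
    ∫ z in ball y ((1 + ‖y‖) / 2), weightedRieszKernel s k y z ∂μ ≤
      2 ^ |k - finrank ℝ E| * (1 + ‖y‖) ^ (k - finrank ℝ E) *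
        (μ.toSphere.real univ * (((1 + ‖y‖) / 2) ^ s / s)) := by
  rw [← setIntegral_ball_norm_sub_rpow μ hs y (by positivity), ← integral_const_mul]
  refine setIntegral_mono_on (integrableOn_ball_weightedRieszKernel μ hs k y y _)
    ((integrableOn_ball_norm_sub_rpow μ hs y _).const_mul _) measurableSet_ball fun z hz ↦ ?_
  rw [weightedRieszKernel, mul_comm]
  gcongr
  rw [mem_ball_iff_norm'] at hz
  have := norm_le_norm_add_norm_sub' y z
  have := norm_le_norm_add_norm_sub y z
  exact rpow_le_rpow_abs_mul_rpow (by positivity) two_pos (by linarith) (by linarith) _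

theorem setIntegral_ball_inter_ball_half_weightedRieszKernel_le (hs : 0 < s) (hk : 0 ≤ k)
    (hr : 0 ≤ r) (y : E) :
    ∫ z in ball 0 r ∩ ball y ((1 + ‖y‖) / 2), weightedRieszKernel s k y z ∂μ ≤
      2 ^ |k - finrank ℝ E| * (μ.toSphere.real univ / s) * (2 * (1 + r)) ^ k *
        (1 + ‖y‖) ^ (s - finrank ℝ E) := by
  rcases (ball (0 : E) r ∩ ball y ((1 + ‖y‖) / 2)).eq_empty_or_nonempty with h | ⟨x, hxr, hxy⟩
  · rw [h, setIntegral_empty]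
    positivity
  have norm_le : 1 + ‖y‖ ≤ 2 * (1 + r) := by
    rw [mem_ball_zero_iff] at hxr
    rw [mem_ball_iff_norm'] at hxy
    linarith [norm_le_norm_add_norm_sub' y x]
  have hy : 0 < 1 + ‖y‖ := by positivity
  calc
    _ ≤ ∫ z in ball y ((1 + ‖y‖) / 2), weightedRieszKernel s k y z ∂μ :=
      setIntegral_mono_set (integrableOn_ball_weightedRieszKernel μ hs k y y _)
        (.of_forall (weightedRieszKernel_nonneg s k y)) (.of_forall inter_subset_right)
    _ ≤ 2 ^ |k - finrank ℝ E| * (1 + ‖y‖) ^ (k - finrank ℝ E) *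
        (μ.toSphere.real univ * (((1 + ‖y‖) / 2) ^ s / s)) :=
      setIntegral_ball_half_weightedRieszKernel_le μ hs k y
    _ ≤ 2 ^ |k - finrank ℝ E| * (1 + ‖y‖) ^ (k - finrank ℝ E) *
        (μ.toSphere.real univ * ((1 + ‖y‖) ^ s / s)) := by
      gcongr
      linarith
    _ = 2 ^ |k - finrank ℝ E| * (μ.toSphere.real univ / s) * (1 + ‖y‖) ^ k *
        (1 + ‖y‖) ^ (s - finrank ℝ E) := by
      rw [Real.rpow_sub hy, Real.rpow_sub hy]
      ring
    _ ≤ _ := by gcongr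

theorem setIntegral_ball_sdiff_ball_half_weightedRieszKernel_le (hs : 0 < s)
    (hsE : s ≤ finrank ℝ E) (hk : 0 < k) (hr : 0 ≤ r) (y : E) :
    ∫ z in ball 0 r \ ball y ((1 + ‖y‖) / 2), weightedRieszKernel s k y z ∂μ ≤
      ((1 + ‖y‖) / 2) ^ (s - finrank ℝ E) * (μ.toSphere.real univ * ((1 + r) ^ k / k)) := by
  have weight_integrable :
      IntegrableOn (fun z : E ↦ (1 + ‖z‖) ^ (k - finrank ℝ E)) (ball 0 r) μ :=
    (continuous_one_add_norm_rpow _).locallyIntegrable.integrableOn_isCompact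
      (isCompact_closedBall 0 r) |>.mono_set ball_subset_closedBall
  calc
    _ ≤ ∫ z in ball 0 r \ ball y ((1 + ‖y‖) / 2),
        ((1 + ‖y‖) / 2) ^ (s - finrank ℝ E) * (1 + ‖z‖) ^ (k - finrank ℝ E) ∂μ := by
      refine setIntegral_mono_on
        ((integrableOn_ball_weightedRieszKernel μ hs k 0 y r).mono_set sdiff_subset)
        ((weight_integrable.mono_set sdiff_subset).const_mul _)
        (measurableSet_ball.diff measurableSet_ball) fun z hz ↦ ?_
      have half_le : (1 + ‖y‖) / 2 ≤ ‖y - z‖ := by simpa [dist_eq_norm_sub'] using hz.2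
      exact mul_le_mul_of_nonneg_right
        (Real.rpow_le_rpow_of_nonpos (by positivity) half_le (by linarith)) (by positivity)
    _ ≤ ((1 + ‖y‖) / 2) ^ (s - finrank ℝ E) *
        ∫ z in ball 0 r, (1 + ‖z‖) ^ (k - finrank ℝ E) ∂μ := by
      rw [integral_const_mul]
      exact mul_le_mul_of_nonneg_left
        (setIntegral_mono_set weight_integrable (.of_forall fun z ↦ by positivity)
          (.of_forall sdiff_subset)) (by positivity)
    _ ≤ _ := by
      gcongr
      exact setIntegral_ball_one_add_norm_rpow_le μ hk hr

theorem setIntegral_ball_weightedRieszKernel_le (hs : 0 < s) (hsE : s ≤ finrank ℝ E) (hk : 0 < k)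
    (hr : 0 ≤ r) (y : E) :
    ∫ z in ball 0 r, weightedRieszKernel s k y z ∂μ ≤
      μ.toSphere.real univ * (2 ^ |k - finrank ℝ E| * 2 ^ k / s + 2 ^ (finrank ℝ E - s) / k) *
        (1 + r) ^ k * (1 + ‖y‖) ^ (s - finrank ℝ E) := by
  have two_mul_rpow : (2 * (1 + r)) ^ k = 2 ^ k * (1 + r) ^ k :=
    Real.mul_rpow zero_le_two (by positivity)
  have half_rpow : ((1 + ‖y‖) / 2) ^ (s - finrank ℝ E) =
      2 ^ (finrank ℝ E - s) * (1 + ‖y‖) ^ (s - finrank ℝ E) := by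
    rw [Real.div_rpow (by positivity) zero_le_two, ← neg_sub s, Real.rpow_neg zero_le_two]
    ring
  have near := setIntegral_ball_inter_ball_half_weightedRieszKernel_le μ hs hk.le hr y
  have far := setIntegral_ball_sdiff_ball_half_weightedRieszKernel_le μ hs hsE hk hr y
  rw [two_mul_rpow] at near
  rw [half_rpow] at far
  rw [← integral_inter_add_sdiff (t := ball y ((1 + ‖y‖) / 2)) measurableSet_ball
    (integrableOn_ball_weightedRieszKernel μ hs k 0 y r)]
  exact (add_le_add near far).trans_eq (by ring)

end WeightedRieszKernel

theorem stmt_9_general {E : Type*} [NormedAddCommGroup E] [NormedSpace ℝ E]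
    [FiniteDimensional ℝ E] [MeasurableSpace E] [BorelSpace E] (μ : Measure E)
    [μ.IsAddHaarMeasure] {s k : ℝ} (hs : 0 < s) (hsE : s ≤ finrank ℝ E) (hk : 0 < k) :
    ∃ C : ℝ, 0 < C ∧ ∀ r : ℝ, 1 ≤ r → ∀ y : E,
      ∫ z in ball 0 r, ‖y - z‖ ^ (s - finrank ℝ E) * (1 + ‖z‖) ^ (k - finrank ℝ E) ∂μ ≤
        C * r ^ k * (1 + ‖y‖) ^ (s - finrank ℝ E) := by
  have : Nontrivial E := nontrivial_of_finrank_pos (R := ℝ) (by exact_mod_cast hs.trans_le hsE)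
  have : NeZero μ.toSphere := ⟨μ.toSphere_ne_zero⟩
  have sphere_pos : 0 < μ.toSphere.real univ := measureReal_univ_pos
  refine ⟨μ.toSphere.real univ *
    (2 ^ |k - finrank ℝ E| * 2 ^ k / s + 2 ^ (finrank ℝ E - s) / k) * 2 ^ k, by positivity,
    fun r hr y ↦ (setIntegral_ball_weightedRieszKernel_le μ hs hsE hk (by linarith) y).trans ?_⟩
  rw [mul_assoc _ (2 ^ k : ℝ), ← Real.mul_rpow zero_le_two (by linarith)]
  gcongr
  linarith

theorem stmt_9 (N : ℕ) (hN : 1 ≤ N) (s k : ℝ)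
    (hs : 0 < s) (hsN : s < N) (hk : 0 < k) (hkN : k < N) (hsk : s + k < N) :
    ∃ C : ℝ, 0 < C ∧ ∀ (r : ℝ), 1 ≤ r → ∀ y : EuclideanSpace ℝ (Fin N),
      (∫ z in Metric.ball (0 : EuclideanSpace ℝ (Fin N)) r,
          ‖y - z‖ ^ (s - N) * (1 + ‖z‖) ^ (k - N))
        ≤ C * r ^ k * (1 + ‖y‖) ^ (s - N) := by
  simpa only [finrank_euclideanSpace_fin] using
    stmt_9_general (E := EuclideanSpace ℝ (Fin N)) volume hs (by simpa using hsN.le) hk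
end

section
/- Let N ≥ 5 be an integer, γ_N = [N(N−4)²(N−2)(N+2)/2]^{−(N−4)/8}, and for ξ' ∈ ℝ^N, λ' > 0 let ũ₀(y) = γ_N (λ'/(λ'² + |y−ξ'|²))^{(N−4)/2}. Then for all i, j ∈ {1,…,N} and all y ∈ ℝ^N: ũ₀(y) · Σ_{k=1}^N (∂_i∂_j∂_k∂_k ũ₀)(y) = [N/((N−3)(N²−4N+8))] Σ_{k=1}^N (∂_i∂_j∂_k∂_k (ũ₀²))(y) + [(N²+4N)/(N²−4N+8)] (∂_i∂_j ũ₀)(y) · Σ_{k=1}^N (∂_k∂_k ũ₀)(y) + [4(N−4)²(N−2)N/(N²−4N+8)] ũ₀(y)² · |y−ξ'|² δ_{ij}/(λ'²+|y−ξ'|²)³ − [4(N−4)²(N²−2)/(N²−4N+8)] ũ₀(y)² · δ_{ij}/(λ'²+|y−ξ'|²)². -/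
open scoped BigOperators

noncomputable section

/-!
Up to a constant, `u₀` is the power `s ^ p` of `s(y) = lam² + |y - ξ|²` with `p = -(N - 4) / 2`.
For every real `q`, both `Δ (s ^ q)` and `∂ᵢ∂ⱼ (s ^ q)` are combinations of `s ^ (q - 1)` and
`s ^ (q - 2)`. Hence each of `u ∂ᵢ∂ⱼΔu`, `∂ᵢ∂ⱼΔ(u²)` and `∂ᵢ∂ⱼu Δu` with `u = s ^ p` has only two
terms containing the factor `(yᵢ - ξᵢ)(yⱼ - ξⱼ)`, one with `s ^ (2p - 3)` and one with
`lam² s ^ (2p - 4)`. Matching these two terms determines, for generic `p`, the weights of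
`∂ᵢ∂ⱼΔ(u²)` and `∂ᵢ∂ⱼu Δu` in the identity; what remains is a multiple of `δᵢⱼ`.
-/

lemma rpow_sub_two {x : ℝ} (hx : x ≠ 0) (q : ℝ) : x ^ (q - 2) = x ^ q / x ^ 2 :=
  mod_cast Real.rpow_sub_natCast hx q 2

section ShiftedNormSq

variable {E : Type*} [NormedAddCommGroup E]

/-- The shifted squared distance `s(y) = lam² + |y - ξ|²` to the centre `ξ`, whose real powers are,
up to constant factors, the bubbles centred at `ξ`. -/
def shiftedNormSq (ξ : E) (lam : ℝ) (y : E) : ℝ :=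
  lam ^ 2 + ‖y - ξ‖ ^ 2

lemma shiftedNormSq_pos (ξ : E) {lam : ℝ} (hlam : lam ≠ 0) (y : E) : 0 < shiftedNormSq ξ lam y := by
  unfold shiftedNormSq
  positivity

variable [InnerProductSpace ℝ E] (ξ : E) {lam : ℝ} (q : ℝ)

lemma contDiff_shiftedNormSq_rpow (hlam : lam ≠ 0) {n : WithTop ℕ∞} :
    ContDiff ℝ n (fun y => shiftedNormSq ξ lam y ^ q) := by
  have hs : ContDiff ℝ n (shiftedNormSq ξ lam) :=
    contDiff_const.add ((contDiff_id.sub contDiff_const).norm_sq ℝ)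
  exact hs.rpow_const_of_ne fun y => (shiftedNormSq_pos ξ hlam y).ne'

lemma hasFDerivAt_shiftedNormSq_rpow (hlam : lam ≠ 0) (y : E) :
    HasFDerivAt (fun y => shiftedNormSq ξ lam y ^ q)
      ((q * shiftedNormSq ξ lam y ^ (q - 1)) • (2 • innerSL ℝ (y - ξ))) y := by
  have hs : HasFDerivAt (shiftedNormSq ξ lam) (2 • innerSL ℝ (y - ξ)) y :=
    (((hasFDerivAt_id y).sub_const ξ).norm_sq.const_add (lam ^ 2)).congr_fderiv (by ext; simp)
  exact hs.rpow_const (Or.inl (shiftedNormSq_pos ξ hlam y).ne')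

end ShiftedNormSq

section PartialDeriv

variable {N : ℕ} (i : Fin N) {f g : EuclideanSpace ℝ (Fin N) → ℝ}

lemma contDiff_pd {m n : WithTop ℕ∞} (hf : ContDiff ℝ n f) (hmn : m + 1 ≤ n) :
    ContDiff ℝ m (pd N i f) :=
  (hf.fderiv_right hmn).clm_apply contDiff_const

lemma differentiable_pd (hf : ContDiff ℝ 2 f) : Differentiable ℝ (pd N i f) :=
  (contDiff_pd i (m := 1) hf (by norm_num)).differentiable one_ne_zero

lemma pd_add (hf : Differentiable ℝ f) (hg : Differentiable ℝ g) :
    pd N i (fun y => f y + g y) = fun y => pd N i f y + pd N i g y := by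
  ext y
  simp only [pd, fderiv_fun_add (hf y) (hg y), add_apply]

lemma pd_sum {ι : Type*} (t : Finset ι) {f : ι → EuclideanSpace ℝ (Fin N) → ℝ}
    (hf : ∀ k ∈ t, Differentiable ℝ (f k)) :
    pd N i (fun y => ∑ k ∈ t, f k y) = fun y => ∑ k ∈ t, pd N i (f k) y := by
  ext y
  simp only [pd, fderiv_fun_sum fun k hk => hf k hk y, sum_apply]

lemma pd_const_mul (c : ℝ) (f : EuclideanSpace ℝ (Fin N) → ℝ) :
    pd N i (fun y => c * f y) = fun y => c * pd N i f y := by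
  ext y
  exact DFunLike.congr_fun (congrFun (fderiv_const_smul_field (f := f) c) y) _

lemma pd_mul (hf : Differentiable ℝ f) (hg : Differentiable ℝ g) :
    pd N i (fun y => f y * g y) = fun y => f y * pd N i g y + g y * pd N i f y := by
  ext y
  simp only [pd, fderiv_fun_mul (hf y) (hg y), add_apply, smul_apply, smul_eq_mul]

lemma contDiff_coord_sub (k : Fin N) (a : ℝ) {n : WithTop ℕ∞} :
    ContDiff ℝ n (fun y : EuclideanSpace ℝ (Fin N) => y k - a) :=
  (EuclideanSpace.proj (𝕜 := ℝ) k).contDiff.sub contDiff_const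

lemma pd_coord_sub (k : Fin N) (a : ℝ) :
    pd N i (fun y => y k - a) = fun _ => if i = k then 1 else 0 := by
  ext y
  have h : HasFDerivAt (fun y : EuclideanSpace ℝ (Fin N) => y k - a)
      (EuclideanSpace.proj k : EuclideanSpace ℝ (Fin N) →L[ℝ] ℝ) y :=
    (EuclideanSpace.proj k : EuclideanSpace ℝ (Fin N) →L[ℝ] ℝ).hasFDerivAt.sub_const a
  simp [pd, h.fderiv, eq_comm]

lemma pd_pd_sum (j : Fin N) {ι : Type*} (t : Finset ι)
    {f : ι → EuclideanSpace ℝ (Fin N) → ℝ} (hf : ∀ k ∈ t, ContDiff ℝ 2 (f k)) :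
    pd N i (pd N j (fun y => ∑ k ∈ t, f k y)) = fun y => ∑ k ∈ t, pd N i (pd N j (f k)) y := by
  rw [pd_sum j t fun k hk => (hf k hk).differentiable two_ne_zero,
    pd_sum i t fun k hk => differentiable_pd j (hf k hk)]

lemma pd_pd_const_mul_add_const_mul (j : Fin N) (a b : ℝ) (hf : ContDiff ℝ 2 f)
    (hg : ContDiff ℝ 2 g) :
    pd N i (pd N j (fun y => a * f y + b * g y))
      = fun y => a * pd N i (pd N j f) y + b * pd N i (pd N j g) y := by
  rw [pd_add j ((hf.differentiable two_ne_zero).const_mul a)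
      ((hg.differentiable two_ne_zero).const_mul b), pd_const_mul, pd_const_mul,
    pd_add i ((differentiable_pd j hf).const_mul a) ((differentiable_pd j hg).const_mul b),
    pd_const_mul, pd_const_mul]

end PartialDeriv

section ShiftedNormSqPartialDeriv

variable {N : ℕ} (ξ : EuclideanSpace ℝ (Fin N)) {lam : ℝ}

lemma pd_shiftedNormSq_rpow (hlam : lam ≠ 0) (i : Fin N) (q : ℝ) :
    pd N i (fun y => shiftedNormSq ξ lam y ^ q)
      = fun y => 2 * q * ((y i - ξ i) * shiftedNormSq ξ lam y ^ (q - 1)) := by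
  ext y
  simp only [pd, (hasFDerivAt_shiftedNormSq_rpow ξ q hlam y).fderiv, map_sub, smul_apply, sub_apply,
    coe_innerSL_apply, EuclideanSpace.inner_single_right, Real.ringHom_apply, one_mul,
    nsmul_eq_mul, Nat.cast_ofNat, smul_eq_mul]
  ring

lemma pd_pd_shiftedNormSq_rpow (hlam : lam ≠ 0) (i j : Fin N) (q : ℝ) :
    pd N i (pd N j (fun y => shiftedNormSq ξ lam y ^ q))
      = fun y => 2 * q * (if i = j then 1 else 0) * shiftedNormSq ξ lam y ^ (q - 1)
        + 4 * q * (q - 1) * ((y i - ξ i) * (y j - ξ j)) * shiftedNormSq ξ lam y ^ (q - 2) := by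
  rw [pd_shiftedNormSq_rpow ξ hlam, pd_const_mul,
    pd_mul i ((contDiff_coord_sub j (ξ j)).differentiable one_ne_zero)
      ((contDiff_shiftedNormSq_rpow ξ (q - 1) hlam).differentiable one_ne_zero),
    pd_coord_sub, pd_shiftedNormSq_rpow ξ hlam]
  ext y
  ring_nf

lemma laplacian_shiftedNormSq_rpow (hlam : lam ≠ 0) (q : ℝ) (y : EuclideanSpace ℝ (Fin N)) :
    ∑ k, pd N k (pd N k (fun y => shiftedNormSq ξ lam y ^ q)) y
      = 2 * q * (N + 2 * q - 2) * shiftedNormSq ξ lam y ^ (q - 1)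
        + -4 * q * (q - 1) * lam ^ 2 * shiftedNormSq ξ lam y ^ (q - 2) := by
  have hs := shiftedNormSq_pos ξ hlam y
  have norm_sq : ∑ k, (y k - ξ k) * (y k - ξ k) = shiftedNormSq ξ lam y - lam ^ 2 := by
    simp [shiftedNormSq, EuclideanSpace.real_norm_sq_eq, ← pow_two]
  simp only [pd_pd_shiftedNormSq_rpow ξ hlam, if_true, Finset.sum_add_distrib, ← Finset.mul_sum,
    ← Finset.sum_mul, norm_sq, Real.rpow_sub_one hs.ne', rpow_sub_two hs.ne',
    Finset.sum_const, Finset.card_univ, Fintype.card_fin, nsmul_eq_mul]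
  field_simp
  ring

lemma pd_pd_laplacian_shiftedNormSq_rpow (hlam : lam ≠ 0) (i j : Fin N) (q : ℝ)
    (y : EuclideanSpace ℝ (Fin N)) :
    ∑ k, pd N i (pd N j (pd N k (pd N k (fun y => shiftedNormSq ξ lam y ^ q)))) y
      = 2 * q * (N + 2 * q - 2) * pd N i (pd N j (fun y => shiftedNormSq ξ lam y ^ (q - 1))) y
        + -4 * q * (q - 1) * lam ^ 2
          * pd N i (pd N j (fun y => shiftedNormSq ξ lam y ^ (q - 2))) y := by
  have contDiff_pd_pd (k : Fin N) :
      ContDiff ℝ 2 (pd N k (pd N k (fun y => shiftedNormSq ξ lam y ^ q))) :=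
    contDiff_pd k (contDiff_pd k (m := 3) (n := 4) (contDiff_shiftedNormSq_rpow ξ q hlam)
      (by norm_num)) (by norm_num)
  have sum_comm := congrFun (pd_pd_sum i j Finset.univ fun k _ => contDiff_pd_pd k) y
  simp only [laplacian_shiftedNormSq_rpow ξ hlam] at sum_comm
  rw [← sum_comm, pd_pd_const_mul_add_const_mul i j _ _ (contDiff_shiftedNormSq_rpow ξ _ hlam)
    (contDiff_shiftedNormSq_rpow ξ _ hlam)]

theorem mul_pd_pd_laplacian_const_mul_shiftedNormSq_rpow (hlam : lam ≠ 0) (i j : Fin N) (c p : ℝ)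
    {u : EuclideanSpace ℝ (Fin N) → ℝ} (hu : ∀ y, u y = c * shiftedNormSq ξ lam y ^ p)
    (y : EuclideanSpace ℝ (Fin N)) :
    2 * (2 * p - 1) * (2 * p - (N - 2) * (p - 2))
        * (u y * ∑ k, pd N i (pd N j (pd N k (pd N k u))) y)
      = (N + 2 * p - 2) * (p - 2) * ∑ k, pd N i (pd N j (pd N k (pd N k (fun z => u z ^ 2)))) y
        + 2 * (2 * p - 1) * (2 - p) * (N + 4)
          * (pd N i (pd N j u) y * ∑ k, pd N k (pd N k u) y)
        + 64 * (2 * p - 1) * p ^ 2 * (p - 1) * (p - 2)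
          * u y ^ 2 * (‖y - ξ‖ ^ 2 * (if i = j then 1 else 0) / shiftedNormSq ξ lam y ^ 3)
        + 16 * (2 * p - 1) * p ^ 2 * ((2 * p - 3) * (N + 2 * p - 2) - 4 * (p - 1) * (p - 2))
          * u y ^ 2 * ((if i = j then 1 else 0) / shiftedNormSq ξ lam y ^ 2) := by
  have hs := shiftedNormSq_pos ξ hlam y
  have hr : ‖y - ξ‖ ^ 2 = shiftedNormSq ξ lam y - lam ^ 2 := by simp [shiftedNormSq]
  have hu_sq : (fun z => u z ^ 2) = fun z => c ^ 2 * shiftedNormSq ξ lam z ^ (p + p) := by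
    ext z
    rw [hu, Real.rpow_add (shiftedNormSq_pos ξ hlam z)]
    ring
  rw [hu_sq, funext hu, hr]
  simp only [pd_const_mul, ← Finset.mul_sum,
    pd_pd_laplacian_shiftedNormSq_rpow ξ hlam, laplacian_shiftedNormSq_rpow ξ hlam]
  simp only [pd_pd_shiftedNormSq_rpow ξ hlam, Real.rpow_sub_one hs.ne', rpow_sub_two hs.ne',
    Real.rpow_add hs]
  field_simp
  ring

end ShiftedNormSqPartialDeriv

theorem stmt_10_general (N : ℕ) (hN : N ≠ 3)
    (γ : ℝ)
    (ξ' : EuclideanSpace ℝ (Fin N)) (lam' : ℝ) (hlam' : 0 < lam')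
    (u₀ : EuclideanSpace ℝ (Fin N) → ℝ)
    (hu : ∀ y, u₀ y = γ * ((lam' / (lam' ^ 2 + ‖y - ξ'‖ ^ 2)) ^ (((N : ℝ) - 4) / 2))) :
    ∀ (i j : Fin N) (y : EuclideanSpace ℝ (Fin N)),
      u₀ y * ∑ k : Fin N, pd N i (pd N j (pd N k (pd N k u₀))) y
        = ((N : ℝ) / (((N : ℝ) - 3) * ((N : ℝ) ^ 2 - 4 * N + 8)))
            * ∑ k : Fin N, pd N i (pd N j (pd N k (pd N k (fun z => u₀ z ^ 2)))) y
          + (((N : ℝ) ^ 2 + 4 * N) / ((N : ℝ) ^ 2 - 4 * N + 8))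
            * pd N i (pd N j u₀) y * ∑ k : Fin N, pd N k (pd N k u₀) y
          + (4 * ((N : ℝ) - 4) ^ 2 * ((N : ℝ) - 2) * N / ((N : ℝ) ^ 2 - 4 * N + 8))
            * u₀ y ^ 2 * (‖y - ξ'‖ ^ 2 * (if i = j then (1 : ℝ) else 0)
                / (lam' ^ 2 + ‖y - ξ'‖ ^ 2) ^ 3)
          - (4 * ((N : ℝ) - 4) ^ 2 * ((N : ℝ) ^ 2 - 2) / ((N : ℝ) ^ 2 - 4 * N + 8))
            * u₀ y ^ 2 * ((if i = j then (1 : ℝ) else 0)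
                / (lam' ^ 2 + ‖y - ξ'‖ ^ 2) ^ 2) := by
  intro i j y
  obtain ⟨p, hp⟩ : ∃ p : ℝ, p = -(((N : ℝ) - 4) / 2) := ⟨_, rfl⟩
  have hu_rpow (z) : u₀ z = γ * lam' ^ (((N : ℝ) - 4) / 2) * shiftedNormSq ξ' lam' z ^ p := by
    have hz := shiftedNormSq_pos ξ' hlam'.ne' z
    rw [hu, ← shiftedNormSq, Real.div_rpow hlam'.le hz.le, hp, Real.rpow_neg hz.le]
    ring
  have identity := mul_pd_pd_laplacian_const_mul_shiftedNormSq_rpow ξ' hlam'.ne' i j _ p hu_rpow y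
  have hN3 : (N : ℝ) - 3 ≠ 0 := sub_ne_zero.mpr (by exact_mod_cast hN)
  -- `D` stays opaque so that `field_simp` cancels it as an atom.
  obtain ⟨D, hD⟩ : ∃ D : ℝ, D = (N : ℝ) ^ 2 - 4 * N + 8 := ⟨_, rfl⟩
  have hD0 : D ≠ 0 := by nlinarith [sq_nonneg ((N : ℝ) - 2)]
  have hs := (shiftedNormSq_pos ξ' hlam'.ne' y).ne'
  rw [hp] at identity
  rw [← shiftedNormSq, ← hD]
  linear_combination (norm := skip) -identity / ((N - 3) * D)
  field_simp
  rw [hD]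
  ring

theorem stmt_10 (N : ℕ) (hN : 5 ≤ N)
    (γ : ℝ)
    (hγ : γ = (((N : ℝ) * ((N : ℝ) - 4) ^ 2 * ((N : ℝ) - 2) * ((N : ℝ) + 2) / 2))
        ^ (-(((N : ℝ) - 4) / 8)))
    (ξ' : EuclideanSpace ℝ (Fin N)) (lam' : ℝ) (hlam' : 0 < lam')
    (u₀ : EuclideanSpace ℝ (Fin N) → ℝ)
    (hu : ∀ y, u₀ y = γ * ((lam' / (lam' ^ 2 + ‖y - ξ'‖ ^ 2)) ^ (((N : ℝ) - 4) / 2))) :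
    ∀ (i j : Fin N) (y : EuclideanSpace ℝ (Fin N)),
      u₀ y * ∑ k : Fin N, pd N i (pd N j (pd N k (pd N k u₀))) y
        = ((N : ℝ) / (((N : ℝ) - 3) * ((N : ℝ) ^ 2 - 4 * N + 8)))
            * ∑ k : Fin N, pd N i (pd N j (pd N k (pd N k (fun z => u₀ z ^ 2)))) y
          + (((N : ℝ) ^ 2 + 4 * N) / ((N : ℝ) ^ 2 - 4 * N + 8))
            * pd N i (pd N j u₀) y * ∑ k : Fin N, pd N k (pd N k u₀) y
          + (4 * ((N : ℝ) - 4) ^ 2 * ((N : ℝ) - 2) * N / ((N : ℝ) ^ 2 - 4 * N + 8))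
            * u₀ y ^ 2 * (‖y - ξ'‖ ^ 2 * (if i = j then (1 : ℝ) else 0)
                / (lam' ^ 2 + ‖y - ξ'‖ ^ 2) ^ 3)
          - (4 * ((N : ℝ) - 4) ^ 2 * ((N : ℝ) ^ 2 - 2) / ((N : ℝ) ^ 2 - 4 * N + 8))
            * u₀ y ^ 2 * ((if i = j then (1 : ℝ) else 0)
                / (lam' ^ 2 + ‖y - ξ'‖ ^ 2) ^ 2) := by
  exact stmt_10_general N (by omega) γ ξ' lam' hlam' u₀ hu
end
end

section
/- For all i, j ∈ {1,…,N} and all y ∈ ℝ^N: Σ_{m=1}^N (∂_m∂_m H̄_{ij})(y) = [2(N+4) f'(|y|²) + 4|y|² f''(|y|²)] · H_{ij}(y). -/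
open scoped BigOperators

noncomputable section

/-- `H̄_{ij}(y) = f(|y|²) H_{ij}(y)`. -/
def Hbar (N : ℕ) (W : Fin N → Fin N → Fin N → Fin N → ℝ) (f : ℝ → ℝ) (i j : Fin N)
    (y : EuclideanSpace ℝ (Fin N)) : ℝ :=
  f (‖y‖ ^ 2) * Hmat N W i j y

/-!
For a function `P` homogeneous of degree `k` on an `n`-dimensional space, Euler's identity
`⟪x, ∇ P x⟫ = k P x` turns the cross term of the product rule for the Laplacian into a multiple
of `P`:
`Δ (g(|x|²) P) = (2 (n + 2 k) g'(|x|²) + 4 |x|² g''(|x|²)) P + g(|x|²) Δ P`.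
The quadratic form `H_{ij}` has `k = 2`, and it is harmonic since its matrix `W_{i p j q}` is
trace-free in `p, q`: the antisymmetries in the first and last index pairs move this trace to the
first and third slots.
-/

open InnerProductSpace Laplacian Gradient Topology RealInnerProductSpace

section SecondDerivative

variable {𝕜 E : Type*} [NontriviallyNormedField 𝕜] [NormedAddCommGroup E] [NormedSpace 𝕜 E] {x : E}

theorem fderiv_fderiv_mul_apply {u v : E → 𝕜} (hu : ContDiffAt 𝕜 2 u x)
    (hv : ContDiffAt 𝕜 2 v x) (a b : E) :
    fderiv 𝕜 (fderiv 𝕜 (u * v)) x a b =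
      u x * fderiv 𝕜 (fderiv 𝕜 v) x a b + fderiv 𝕜 u x a * fderiv 𝕜 v x b +
        (v x * fderiv 𝕜 (fderiv 𝕜 u) x a b + fderiv 𝕜 v x a * fderiv 𝕜 u x b) := by
  have leibniz : fderiv 𝕜 (u * v) =ᶠ[𝓝 x] fun y ↦ u y • fderiv 𝕜 v y + v y • fderiv 𝕜 u y := by
    filter_upwards [hu.eventually (by simp), hv.eventually (by simp)] with y hu hv
    exact fderiv_mul (hu.differentiableAt two_ne_zero) (hv.differentiableAt two_ne_zero)
  have hu₁ := hu.differentiableAt two_ne_zero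
  have hv₁ := hv.differentiableAt two_ne_zero
  have hu₂ := (hu.fderiv_right one_add_one_eq_two.le).differentiableAt one_ne_zero
  have hv₂ := (hv.fderiv_right one_add_one_eq_two.le).differentiableAt one_ne_zero
  rw [leibniz.fderiv_eq, fderiv_fun_add (hu₁.fun_smul hv₂) (hv₁.fun_smul hu₂),
    fderiv_fun_smul hu₁ hv₂, fderiv_fun_smul hv₁ hu₂]
  rfl

theorem fderiv_fderiv_comp_apply {g : 𝕜 → 𝕜} {h : E → 𝕜} (hg : ContDiffAt 𝕜 2 g (h x))
    (hh : ContDiffAt 𝕜 2 h x) (a b : E) :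
    fderiv 𝕜 (fderiv 𝕜 (g ∘ h)) x a b =
      deriv g (h x) * fderiv 𝕜 (fderiv 𝕜 h) x a b +
        deriv (deriv g) (h x) * fderiv 𝕜 h x a * fderiv 𝕜 h x b := by
  have chain : fderiv 𝕜 (g ∘ h) =ᶠ[𝓝 x] fun y ↦ deriv g (h y) • fderiv 𝕜 h y := by
    filter_upwards [hh.continuousAt.eventually (hg.eventually (by simp)), hh.eventually (by simp)]
      with y hg hh
    exact ((hg.differentiableAt two_ne_zero).hasDerivAt.comp_hasFDerivAt y
      (hh.differentiableAt two_ne_zero).hasFDerivAt).fderiv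
  have hh₁ := hh.differentiableAt two_ne_zero
  have hh₂ := (hh.fderiv_right one_add_one_eq_two.le).differentiableAt one_ne_zero
  have hg₂ : DifferentiableAt 𝕜 (deriv g) (h x) :=
    ((hg.fderiv_right one_add_one_eq_two.le).clm_apply contDiffAt_const).differentiableAt
      one_ne_zero
  have hg' : HasFDerivAt (fun y ↦ deriv g (h y)) (deriv (deriv g) (h x) • fderiv 𝕜 h x) x :=
    hg₂.hasDerivAt.comp_hasFDerivAt x hh₁.hasFDerivAt
  rw [chain.fderiv_eq, (hg'.fun_smul hh₂.hasFDerivAt).fderiv]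
  rfl

theorem fderiv_apply_self_of_homogeneous {F : Type*} [NormedAddCommGroup F] [NormedSpace 𝕜 F]
    {P : E → F} {k : ℕ} (hP : DifferentiableAt 𝕜 P x) (hom : ∀ t : 𝕜, P (t • x) = t ^ k • P x) :
    fderiv 𝕜 P x x = (k : 𝕜) • P x := by
  have hline : HasDerivAt (fun t : 𝕜 ↦ t • x) x 1 := by
    simpa using (hasDerivAt_id (1 : 𝕜)).smul_const x
  have hpow : HasDerivAt (fun t : 𝕜 ↦ t ^ k • P x) ((k : 𝕜) • P x) 1 := by
    simpa using (hasDerivAt_pow k (1 : 𝕜)).smul_const (P x)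
  have hcomp : HasDerivAt (fun t : 𝕜 ↦ P (t • x)) (fderiv 𝕜 P x x) 1 :=
    HasFDerivAt.comp_hasDerivAt (1 : 𝕜) (by simpa using hP.hasFDerivAt) hline
  exact hcomp.unique (by simpa only [hom] using hpow)

end SecondDerivative

section Gradient

variable {E : Type*} [NormedAddCommGroup E] [InnerProductSpace ℝ E] [CompleteSpace E] {x : E}

theorem gradient_comp {g : ℝ → ℝ} {h : E → ℝ} (hg : DifferentiableAt ℝ g (h x))
    (hh : DifferentiableAt ℝ h x) : ∇ (g ∘ h) x = deriv g (h x) • ∇ h x := by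
  rw [gradient, (hg.hasDerivAt.comp_hasFDerivAt x hh.hasFDerivAt).fderiv, map_smul, gradient]

theorem gradient_norm_sq (x : E) : ∇ (fun y : E ↦ ‖y‖ ^ 2) x = (2 : ℝ) • x := by
  refine ext_inner_right ℝ fun w ↦ ?_
  rw [inner_gradient_left, (hasStrictFDerivAt_norm_sq x).hasFDerivAt.fderiv]
  simp [real_inner_smul_left]

theorem sum_fderiv_mul_fderiv_eq_inner_gradient {ι : Type*} [Fintype ι] (u v : E → ℝ)
    (b : OrthonormalBasis ι ℝ E) (x : E) :
    ∑ i, fderiv ℝ u x (b i) * fderiv ℝ v x (b i) = ⟪∇ u x, ∇ v x⟫ := by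
  rw [← b.sum_inner_mul_inner]
  simp only [inner_gradient_left, real_inner_comm (∇ v x)]

end Gradient

section Laplacian

variable {E : Type*} [NormedAddCommGroup E] [InnerProductSpace ℝ E] [FiniteDimensional ℝ E]
  {x : E}

theorem laplacian_eq_sum_fderiv_fderiv {ι F : Type*} [Fintype ι] [NormedAddCommGroup F]
    [NormedSpace ℝ F] (u : E → F) (b : OrthonormalBasis ι ℝ E) (x : E) :
    Δ u x = ∑ i, fderiv ℝ (fderiv ℝ u) x (b i) (b i) := by
  simp [laplacian_eq_iteratedFDeriv_orthonormalBasis u b, iteratedFDeriv_two_apply]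

theorem laplacian_mul {u v : E → ℝ} (hu : ContDiffAt ℝ 2 u x) (hv : ContDiffAt ℝ 2 v x) :
    Δ (u * v) x = u x * Δ v x + 2 * ⟪∇ u x, ∇ v x⟫ + v x * Δ u x := by
  let b := stdOrthonormalBasis ℝ E
  simp only [laplacian_eq_sum_fderiv_fderiv _ b, fderiv_fderiv_mul_apply hu hv,
    Finset.sum_add_distrib, ← Finset.mul_sum, sum_fderiv_mul_fderiv_eq_inner_gradient,
    real_inner_comm (∇ u x)]
  ring

theorem laplacian_comp {g : ℝ → ℝ} {h : E → ℝ} (hg : ContDiffAt ℝ 2 g (h x))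
    (hh : ContDiffAt ℝ 2 h x) :
    Δ (g ∘ h) x = deriv g (h x) * Δ h x + deriv (deriv g) (h x) * ‖∇ h x‖ ^ 2 := by
  let b := stdOrthonormalBasis ℝ E
  simp only [laplacian_eq_sum_fderiv_fderiv _ b, fderiv_fderiv_comp_apply hg hh, mul_assoc,
    Finset.sum_add_distrib, ← Finset.mul_sum, sum_fderiv_mul_fderiv_eq_inner_gradient,
    real_inner_self_eq_norm_sq]

theorem laplacian_inner_self_apply (T : E →L[ℝ] E) (x : E) :
    Δ (fun y ↦ ⟪y, T y⟫) x = 2 * LinearMap.trace ℝ E T := by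
  let I : E →L[ℝ] E →L[ℝ] ℝ := innerSL ℝ
  let B : E →L[ℝ] E →L[ℝ] ℝ := I.bilinearComp (.id ℝ E) T + I.bilinearComp T (.id ℝ E)
  have hB (y w : E) : B y w = ⟪y, T w⟫ + ⟪T y, w⟫ := rfl
  have hfderiv : fderiv ℝ (fun y ↦ ⟪y, T y⟫) = B := by
    ext y w
    rw [fderiv_inner_apply ℝ differentiableAt_fun_id T.differentiableAt, T.fderiv, fderiv_fun_id,
      hB, real_inner_comm w]
    rfl
  let b := stdOrthonormalBasis ℝ E
  simp only [laplacian_eq_sum_fderiv_fderiv _ b, hfderiv, B.fderiv, hB, real_inner_comm,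
    LinearMap.trace_eq_sum_inner _ b, Finset.mul_sum, two_mul, ContinuousLinearMap.coe_coe]

theorem laplacian_norm_sq (x : E) : Δ (fun y : E ↦ ‖y‖ ^ 2) x = 2 * Module.finrank ℝ E := by
  simpa using laplacian_inner_self_apply (.id ℝ E) x

theorem laplacian_comp_norm_sq_mul {g : ℝ → ℝ} {P : E → ℝ} {k : ℕ}
    (hg : ContDiffAt ℝ 2 g (‖x‖ ^ 2)) (hP : ContDiffAt ℝ 2 P x)
    (hom : ∀ t : ℝ, P (t • x) = t ^ k * P x) :
    Δ (fun y ↦ g (‖y‖ ^ 2) * P y) x =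
      (2 * (Module.finrank ℝ E + 2 * k) * deriv g (‖x‖ ^ 2) +
        4 * ‖x‖ ^ 2 * deriv (deriv g) (‖x‖ ^ 2)) * P x + g (‖x‖ ^ 2) * Δ P x := by
  have hnorm : ContDiffAt ℝ 2 (fun y : E ↦ ‖y‖ ^ 2) x := (contDiff_norm_sq ℝ).contDiffAt
  have hinner : ⟪∇ (g ∘ fun y ↦ ‖y‖ ^ 2) x, ∇ P x⟫ = 2 * k * deriv g (‖x‖ ^ 2) * P x := by
    rw [gradient_comp (h := (‖·‖ ^ 2)) (hg.differentiableAt two_ne_zero)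
      (hnorm.differentiableAt two_ne_zero), gradient_norm_sq, real_inner_smul_left,
      real_inner_smul_left, inner_gradient_right, fderiv_apply_self_of_homogeneous
      (hP.differentiableAt two_ne_zero) hom, conj_trivial, smul_eq_mul]
    ring
  have hprod := laplacian_mul (hg.comp x hnorm) hP
  rw [laplacian_comp (h := (‖·‖ ^ 2)) hg hnorm, hinner, laplacian_norm_sq, gradient_norm_sq,
    norm_smul, Real.norm_two] at hprod
  refine hprod.trans ?_
  simp only [Function.comp_apply]
  ring

end Laplacian

theorem sum_pd_pd_eq_laplacian {N : ℕ} {u : EuclideanSpace ℝ (Fin N) → ℝ}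
    {y : EuclideanSpace ℝ (Fin N)} (hu : ContDiffAt ℝ 2 u y) :
    ∑ m, pd N m (pd N m u) y = Δ u y := by
  have hu₂ := (hu.fderiv_right one_add_one_eq_two.le).differentiableAt one_ne_zero
  rw [laplacian_eq_sum_fderiv_fderiv u (EuclideanSpace.basisFun (Fin N) ℝ)]
  refine Finset.sum_congr rfl fun m _ ↦ ?_
  have hpd : pd N m u = fun z ↦ fderiv ℝ u z (EuclideanSpace.single m 1) := rfl
  rw [pd, hpd, fderiv_clm_apply hu₂ (differentiableAt_const _)]
  simp

section Hmat

variable {N : ℕ} (W : Fin N → Fin N → Fin N → Fin N → ℝ) (i j : Fin N)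

theorem Hmat_eq_inner : Hmat N W i j =
    fun y ↦ ⟪y, Matrix.toEuclideanCLM (𝕜 := ℝ) (Matrix.of fun p q ↦ W i p j q) y⟫ := by
  ext y
  simp only [Hmat, Matrix.inner_toEuclideanCLM, dotProduct, Matrix.mulVec, Matrix.of_apply,
    Finset.mul_sum]
  exact Finset.sum_congr rfl fun p _ ↦ Finset.sum_congr rfl fun q _ ↦ by ring

theorem contDiff_Hmat {n : WithTop ℕ∞} : ContDiff ℝ n (Hmat N W i j) := by
  rw [Hmat_eq_inner]
  exact contDiff_id.inner ℝ (ContinuousLinearMap.contDiff _)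

theorem Hmat_smul (t : ℝ) (y : EuclideanSpace ℝ (Fin N)) :
    Hmat N W i j (t • y) = t ^ 2 * Hmat N W i j y := by
  simp only [Hmat_eq_inner, map_smul, real_inner_smul_left, real_inner_smul_right]
  ring

theorem laplacian_Hmat (y : EuclideanSpace ℝ (Fin N)) :
    Δ (Hmat N W i j) y = 2 * ∑ m, W i m j m := by
  rw [Hmat_eq_inner, laplacian_inner_self_apply, Matrix.coe_toEuclideanCLM_eq_toEuclideanLin,
    Matrix.toEuclideanLin_eq_toLin_orthonormal, Matrix.trace_toLin_eq]
  rfl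

end Hmat

theorem sum_second_fourth_eq_sum_first_third {ι M : Type*} [Fintype ι] [AddCommGroup M]
    {W : ι → ι → ι → ι → M} (h₁₂ : ∀ i p j q, W i p j q = -W p i j q)
    (h₃₄ : ∀ i p j q, W i p j q = -W i p q j) (i j : ι) :
    ∑ m, W i m j m = ∑ m, W m i m j :=
  Finset.sum_congr rfl fun m _ ↦ by rw [h₁₂, h₃₄, neg_neg]

theorem stmt_11_general {N : ℕ} {W : Fin N → Fin N → Fin N → Fin N → ℝ} {i j : Fin N}
    (hW : ∑ m, W i m j m = 0) {f : ℝ → ℝ} {y : EuclideanSpace ℝ (Fin N)}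
    (hf : ContDiffAt ℝ 2 f (‖y‖ ^ 2)) :
    ∑ m : Fin N, pd N m (pd N m (Hbar N W f i j)) y
      = (2 * ((N : ℝ) + 4) * deriv f (‖y‖ ^ 2)
          + 4 * ‖y‖ ^ 2 * deriv (deriv f) (‖y‖ ^ 2)) * Hmat N W i j y := by
  have hH : ContDiffAt ℝ 2 (Hmat N W i j) y := (contDiff_Hmat W i j).contDiffAt
  have hHbar : ContDiffAt ℝ 2 (Hbar N W f i j) y :=
    (hf.comp y (contDiff_norm_sq ℝ).contDiffAt).mul hH
  have harmonic : Δ (Hmat N W i j) y = 0 := by rw [laplacian_Hmat, hW, mul_zero]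
  rw [sum_pd_pd_eq_laplacian hHbar]
  refine (laplacian_comp_norm_sq_mul hf hH (Hmat_smul W i j · y)).trans ?_
  rw [harmonic, finrank_euclideanSpace_fin]
  push_cast
  ring

theorem stmt_11 (N : ℕ) (hN : 5 ≤ N)
    (W : Fin N → Fin N → Fin N → Fin N → ℝ)
    (hW1 : ∀ i p j q, W i p j q = - W p i j q)
    (hW2 : ∀ i p j q, W i p j q = - W i p q j)
    (hW3 : ∀ i p j q, W i p j q = W j q i p)
    (hBianchi : ∀ i p j q, W i p j q + W i j q p + W i q p j = 0)
    (hTrace : ∀ p q, ∑ i : Fin N, W i p i q = 0)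
    (f : ℝ → ℝ)
    (hf : ∃ P : Polynomial ℝ, P.degree ≤ 4 ∧ ∀ x, f x = P.eval x) :
    ∀ (i j : Fin N) (y : EuclideanSpace ℝ (Fin N)),
      ∑ m : Fin N, pd N m (pd N m (Hbar N W f i j)) y
        = (2 * ((N : ℝ) + 4) * deriv f (‖y‖ ^ 2)
            + 4 * ‖y‖ ^ 2 * deriv (deriv f) (‖y‖ ^ 2)) * Hmat N W i j y := by
  obtain ⟨P, -, hP⟩ := hf
  obtain rfl : f = P.eval := funext hP
  exact fun i j y ↦ stmt_11_general
    ((sum_second_fourth_eq_sum_first_third hW1 hW2 i j).trans (hTrace i j))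
    (P.contDiff_aeval 2).contDiffAt
end
end
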